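/- arXiv:math/0203180 — 3 statements merged into one kernel-verified Lean document; each statement's English description precedes it below -/
import Mathlib

section
/- Let t ≥ 2 and let p_1, …, p_t ∈ k be algebraically independent over the prime subfield of k. Let A be the k-subalgebra of End_k(k[Y,Y⁻¹]) generated by the Eulerian derivatives D_{p_1}, …, D_{p_t}. Then A is noetherian but not strongly noetherian: there exists a commutative noetherian k-algebra B such that the tensor product A ⊗_k B is not a left noetherian ring. -/
set_option synthInstance.maxHeartbeats 1000000
set_option maxHeartbeats 4000000
set_option maxSynthPendingDepth 3

noncomputable section

universe u

/-!
Adjoin the coordinate `p o = 1` to the parameters. A form `F` of degree `m` acts on Laurent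
polynomials by `T n ↦ F (p ^ n) • T (n - m)`, and the derivative of parameter `p i` is a multiple of
the action of `X i - X o`. This turns the algebra into a ring of polynomials, with multiplication
twisted by `p`, whose forms of degree `m` vanish at the points `p ^ j` with `0 ≤ j < m`. Its
opposite is of the same kind, with `p⁻¹` in place of `p`.

It is noetherian because the orbit of `p` is critically dense: a nonzero form vanishes at finitely
many of its points only. The leading forms of an ascending chain of left ideals lie in an ideal
generated by finitely many forms `g i`, none of which vanishes at `p ^ j` for `j ≥ s`. Every leading
form of large degree `m` can be written as `∑ f i * g i` with all `f i` vanishing at the points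
`p ^ j` with `s ≤ j < m`, and all such sums whose `f i` also vanish at the first `s` points are
leading forms. So only the finitely many values of the `f i` at these points matter.

Let `B` be the ring of rational functions that are regular at all points `p ^ j` in generic
directions. It is a principal ideal ring, over which there is a generic point `q` that is congruent
to each `p ^ j` modulo a nonunit `π j`. The left ideal of the elements vanishing at `q` is not
finitely generated: modulo `π j`, the derivatives at `p ^ j` of the forms of degree `j + 1` vanish
on the left ideal generated by its elements of degree at most `j`, but not on the whole ideal.
-/

universe v

open MvPolynomial

section LinearForms

variable {R σ : Type*} [CommRing R]

/-- The linear form `X i - c i * X o`, which vanishes at the point `c` if `c` is normalized so that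
`c o = 1`. -/
def linForm (o : σ) (c : σ → R) (i : σ) : MvPolynomial σ R :=
  X i - C (c i) * X o

lemma isHomogeneous_linForm (o : σ) (c : σ → R) (i : σ) : (linForm o c i).IsHomogeneous 1 :=
  (isHomogeneous_X R i).sub (isHomogeneous_C_mul_X (c i) o)

lemma eval_linForm {o : σ} {d : σ → R} (hd : d o = 1) (c : σ → R) (i : σ) :
    eval d (linForm o c i) = d i - c i := by
  simp [linForm, hd]

theorem aeval_sub_aeval_mem {S : Type*} [CommRing S] [Algebra R S] {I : Ideal S} {x y : σ → S}
    (hxy : ∀ i, x i - y i ∈ I) (f : MvPolynomial σ R) : aeval x f - aeval y f ∈ I := by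
  have h : (Ideal.Quotient.mkₐ R I).comp (aeval x) = (Ideal.Quotient.mkₐ R I).comp (aeval y) :=
    algHom_ext fun i => by simpa using Ideal.Quotient.eq.mpr (hxy i)
  exact Ideal.Quotient.eq.mp (DFunLike.congr_fun h f)

lemma aeval_C_mul_X_of_isHomogeneous {f : MvPolynomial σ R} {n : ℕ} (hf : f.IsHomogeneous n)
    (c : σ → R) (o : σ) :
    aeval (fun i => C (c i) * X o : σ → MvPolynomial σ R) f = C (eval c f) * X o ^ n := by
  rw [aeval_def, eval₂_eq, eval_eq, map_sum, Finset.sum_mul]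
  refine Finset.sum_congr rfl fun a ha => ?_
  simp only [mul_pow, Finset.prod_mul_distrib, Finset.prod_pow_eq_pow_sum, map_mul, map_prod,
    map_pow, algebraMap_eq, ← mul_assoc]
  rw [hf.degree_eq_sum_deg_support ha]

theorem mem_span_range_linForm {f : MvPolynomial σ R} {n : ℕ} (hf : f.IsHomogeneous n) (o : σ)
    {c : σ → R} (hfc : eval c f = 0) : f ∈ Ideal.span (Set.range (linForm o c)) := by
  have h := aeval_sub_aeval_mem (I := Ideal.span (Set.range (linForm o c)))
    (fun i => Ideal.subset_span ⟨i, rfl⟩) f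
  rwa [aeval_X_left_apply, aeval_C_mul_X_of_isHomogeneous hf, hfc, C_0, zero_mul, sub_zero] at h

end LinearForms

section HomogeneousComponents

attribute [local instance] MvPolynomial.gradedAlgebra

variable {R σ : Type*} [CommSemiring R]

lemma decompose_homogeneousSubmodule_apply (f : MvPolynomial σ R) (m : ℕ) :
    (DirectSum.decompose (homogeneousSubmodule σ R) f m : MvPolynomial σ R) =
      homogeneousComponent m f :=
  decomposition.decompose'_apply f m

lemma homogeneousComponent_mul_of_le (f : MvPolynomial σ R) {g : MvPolynomial σ R} {b m : ℕ}
    (hg : g.IsHomogeneous b) (hbm : b ≤ m) :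
    homogeneousComponent m (f * g) = homogeneousComponent (m - b) f * g := by
  simpa only [decompose_homogeneousSubmodule_apply] using
    DirectSum.coe_decompose_mul_of_right_mem_of_le (a := f) (homogeneousSubmodule σ R) hg hbm

theorem exists_isHomogeneous_eq_sum_mul {κ : Type*} [Fintype κ] {g : κ → MvPolynomial σ R}
    {b : κ → ℕ} (hg : ∀ i, (g i).IsHomogeneous (b i)) {m : ℕ} (hb : ∀ i, b i ≤ m)
    {F : MvPolynomial σ R} (hF : F.IsHomogeneous m) (hFg : F ∈ Ideal.span (Set.range g)) :
    ∃ f : κ → MvPolynomial σ R, (∀ i, (f i).IsHomogeneous (m - b i)) ∧ F = ∑ i, f i * g i := by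
  obtain ⟨f, rfl⟩ := Ideal.mem_span_range_iff_exists_fun.mp hFg
  refine ⟨fun i => homogeneousComponent (m - b i) (f i),
    fun i => homogeneousComponent_isHomogeneous _ _, ?_⟩
  conv_lhs => rw [← homogeneousComponent_eq_self hF, map_sum]
  exact Finset.sum_congr rfl fun i _ => homogeneousComponent_mul_of_le _ (hg i) (hb i)

end HomogeneousComponents

section Interpolation

variable {k σ ι : Type*} [Field k] {d : ι → σ → k} {o e : σ} {T : Finset ι}

theorem exists_isHomogeneous_forall_eval_eq (ho : ∀ j, d j o = 1)
    (he : Set.InjOn (fun j => d j e) T) {n : ℕ} (hn : T.card ≤ n + 1) (a : ι → k) :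
    ∃ L : MvPolynomial σ k, L.IsHomogeneous n ∧ ∀ j ∈ T, eval (d j) L = a j := by
  classical
  set P := Lagrange.interpolate T (fun j => d j e) a with hP
  have hdeg : P.natDegree < n + 1 := by
    rcases eq_or_ne P 0 with h0 | h0
    · simp [h0]
    · refine (Polynomial.natDegree_lt_iff_degree_lt h0).mpr
        ((Lagrange.degree_interpolate_lt a he).trans_le ?_)
      exact_mod_cast hn
  refine ⟨∑ i ∈ Finset.range (n + 1), C (P.coeff i) * (X e ^ i * X o ^ (n - i)),
    IsHomogeneous.sum _ _ _ fun i hi => IsHomogeneous.C_mul ?_ _, fun j hj => ?_⟩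
  · have h := (isHomogeneous_X_pow (R := k) e i).mul (isHomogeneous_X_pow o (n - i))
    rwa [Nat.add_sub_cancel' (Nat.lt_succ_iff.mp (Finset.mem_range.mp hi))] at h
  · rw [← Lagrange.eval_interpolate_at_node a he hj, ← hP, Polynomial.eval_eq_sum_range' hdeg]
    simp [ho]

/-- The space of forms of degree `a` that vanish at the points `d j` with `j ∈ s`. -/
def vanishingForms (d : ι → σ → k) (s : Finset ι) (a : ℕ) : Submodule k (MvPolynomial σ k) :=
  homogeneousSubmodule σ k a ⊓ ⨅ j ∈ s, LinearMap.ker (aeval (d j)).toLinearMap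

lemma mem_vanishingForms {s : Finset ι} {a : ℕ} {F : MvPolynomial σ k} :
    F ∈ vanishingForms d s a ↔ F.IsHomogeneous a ∧ ∀ j ∈ s, eval (d j) F = 0 := by
  simp [vanishingForms, Submodule.mem_iInf, aeval_eq_eval]

lemma sum_sum_sub_swap_mul_mul {R κ : Type*} [CommRing R] [Fintype κ] (B : κ → κ → R) (g : κ → R) :
    ∑ i, (∑ i', (B i i' - B i' i) * g i') * g i = 0 := by
  simp only [sub_mul, Finset.sum_sub_distrib, Finset.sum_mul]
  rw [sub_eq_zero, Finset.sum_comm]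
  exact Finset.sum_congr rfl fun i _ => Finset.sum_congr rfl fun i' _ => by ring

/-- A relation `∑ f i * g i` that vanishes on `T` is corrected to have coefficients vanishing on `T`
by adding Koszul relations among the `g i`, which can be prescribed on `T` by interpolation. -/
theorem exists_vanishingForms_sum_mul_eq {κ : Type*} [Fintype κ] (ho : ∀ j, d j o = 1)
    (he : Set.InjOn (fun j => d j e) T) {m : ℕ} {b : κ → ℕ} {f g : κ → MvPolynomial σ k}
    (hg : ∀ i, (g i).IsHomogeneous (b i)) (hf : ∀ i, (f i).IsHomogeneous (m - b i))
    (hgT : ∀ j ∈ T, ∃ i, eval (d j) (g i) ≠ 0) (hfg : ∀ j ∈ T, eval (d j) (∑ i, f i * g i) = 0)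
    (hT : ∀ i i', b i + b i' + T.card ≤ m + 1) :
    ∃ f' : κ → MvPolynomial σ k, (∀ i, f' i ∈ vanishingForms d T (m - b i)) ∧
      ∑ i, f' i * g i = ∑ i, f i * g i := by
  classical
  rcases T.eq_empty_or_nonempty with rfl | hT₀
  · exact ⟨f, fun i => mem_vanishingForms.mpr ⟨hf i, by simp⟩, rfl⟩
  have hT₁ := hT₀.card_pos
  have : Nonempty κ := hT₀.elim fun j hj => ⟨(hgT j hj).choose⟩
  choose! i₀ hi₀ using hgT
  let ε : ι → κ → k := fun j => Pi.single (i₀ j) (eval (d j) (g (i₀ j)))⁻¹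
  have hε : ∀ j ∈ T, ∑ i, ε j i * eval (d j) (g i) = 1 := fun j hj => by
    simp [ε, Pi.single_apply, hi₀ j hj]
  choose B hBh hB using fun i i' => exists_isHomogeneous_forall_eval_eq (n := m - b i - b i') ho he
    (by have := hT i i'; omega) fun j => eval (d j) (f i) * ε j i'
  refine ⟨fun i => f i - ∑ i', (B i i' - B i' i) * g i', fun i => mem_vanishingForms.mpr
    ⟨(hf i).sub (IsHomogeneous.sum _ _ _ fun i' _ => ?_), fun j hj => ?_⟩, ?_⟩
  · have h := ((hBh i i').sub (Nat.sub_right_comm m (b i') (b i) ▸ hBh i' i)).mul (hg i')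
    rwa [show m - b i - b i' + b i' = m - b i by have := hT i i'; omega] at h
  · have h0 : ∑ i', eval (d j) (f i') * eval (d j) (g i') = 0 := by simpa using hfg j hj
    calc eval (d j) (f i - ∑ i', (B i i' - B i' i) * g i')
      _ = eval (d j) (f i) - (eval (d j) (f i) * ∑ i', ε j i' * eval (d j) (g i')
          - ε j i * ∑ i', eval (d j) (f i') * eval (d j) (g i')) := by
        simp only [map_sub, map_sum, map_mul, hB _ _ j hj, Finset.mul_sum,
          ← Finset.sum_sub_distrib]
        congr 1
        exact Finset.sum_congr rfl fun i' _ => by ring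
      _ = 0 := by rw [hε j hj, h0]; ring
  · rw [← sub_zero (∑ i, f i * g i), ← sum_sum_sub_swap_mul_mul B g, ← Finset.sum_sub_distrib]
    exact Finset.sum_congr rfl fun i _ => sub_mul _ _ _

/-- A family of points, given by homogeneous coordinates, is critically dense if every nonzero form
vanishes at only finitely many of its members. -/
def IsCriticallyDense {R : Type*} [CommRing R] (d : ι → σ → R) : Prop :=
  ∀ (m : ℕ) (F : MvPolynomial σ R), F.IsHomogeneous m → F ≠ 0 → {j | eval (d j) F = 0}.Finite

end Interpolation

section PointSystems

variable {k σ : Type*} [Field k] {d : ℕ → σ → k} {o e : σ}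

/-- A sequence of spaces `M m` of forms of degree `m` vanishing at the first `m` points of `d`, such
that multiplication by the linear forms vanishing at the point `d m` maps `M m` to `M (m + 1)`. Such
sequences arise from the one-sided ideals of the algebras studied below. -/
structure IsPointSystem (d : ℕ → σ → k) (o : σ) (M : ℕ → Submodule k (MvPolynomial σ k)) :
    Prop where
  le_vanishingForms : ∀ m, M m ≤ vanishingForms d (Finset.range m) m
  linForm_mul_mem : ∀ m, ∀ F ∈ M m, ∀ i, linForm o (d m) i * F ∈ M (m + 1)

theorem IsPointSystem.mul_mem_of_mem_vanishingForms [Finite σ]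
    {M : ℕ → Submodule k (MvPolynomial σ k)} (hM : IsPointSystem d o M) (ho : ∀ j, d j o = 1)
    (he : Function.Injective fun j => d j e) {b : ℕ} {F : MvPolynomial σ k} (hF : F ∈ M b) {a : ℕ}
    {f : MvPolynomial σ k} (hf : f ∈ vanishingForms d (Finset.Ico b (b + a)) a) :
    f * F ∈ M (b + a) := by
  cases nonempty_fintype σ
  induction a generalizing f with
  | zero =>
    obtain ⟨c, rfl⟩ : ∃ c, f = C c :=
      ⟨_, totalDegree_eq_zero_iff_eq_C.mp ((mem_vanishingForms.mp hf).1.totalDegree_le.antisymm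
        (Nat.zero_le _))⟩
    simpa only [C_mul', add_zero] using (M b).smul_mem c hF
  | succ a ih =>
    obtain ⟨hfh, hfd⟩ := mem_vanishingForms.mp hf
    have hlin := isHomogeneous_linForm o (d (b + a))
    obtain ⟨g, hg, rfl⟩ := exists_isHomogeneous_eq_sum_mul hlin (fun _ => by omega) hfh
      (mem_span_range_linForm hfh o (hfd (b + a) (by simp)))
    obtain ⟨g', hg', hgg'⟩ := exists_vanishingForms_sum_mul_eq (T := Finset.Ico b (b + a)) ho
      he.injOn hlin hg
      (fun j hj => ⟨e, by
        rw [eval_linForm (ho j), sub_ne_zero, he.ne_iff]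
        exact (Finset.mem_Ico.mp hj).2.ne⟩)
      (fun j hj => hfd j (Finset.Ico_subset_Ico_right (by omega) hj))
      (fun _ _ => by rw [Nat.card_Ico]; omega)
    rw [← hgg', Finset.sum_mul]
    refine Submodule.sum_mem _ fun i _ => ?_
    rw [mul_comm (g' i), mul_assoc]
    exact hM.linForm_mul_mem _ _ (ih (hg' i)) i

end PointSystems

section Lifts

variable {k σ κ : Type*} [Field k] {d : ℕ → σ → k} {s : ℕ}

/-- Evaluation of a family of polynomials at the first `s` points of `d`. -/
def evalFirst (d : ℕ → σ → k) (s : ℕ) : (κ → MvPolynomial σ k) →ₗ[k] κ → Fin s → k :=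
  (LinearMap.pi fun j : Fin s => (aeval (d j)).toLinearMap).compLeft κ

lemma evalFirst_apply (f : κ → MvPolynomial σ k) (i : κ) (j : Fin s) :
    evalFirst d s f i j = eval (d j) (f i) := by
  simp [evalFirst, aeval_eq_eval]

variable [Fintype κ] {o e : σ} {g : κ → MvPolynomial σ k} {b : κ → ℕ} {m : ℕ}
  {N N' : Submodule k (MvPolynomial σ k)}

/-- The families of coefficients `f` for which `∑ f i * g i` lies in `N`, where `f i` is a form of
degree `m - b i` that vanishes at the points `d j` with `s ≤ j < m`. -/
def liftedForms (d : ℕ → σ → k) (g : κ → MvPolynomial σ k) (b : κ → ℕ) (s m : ℕ)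
    (N : Submodule k (MvPolynomial σ k)) : Submodule k (κ → MvPolynomial σ k) :=
  Submodule.pi Set.univ (fun i => vanishingForms d (Finset.Ico s m) (m - b i)) ⊓
    N.comap ((Fintype.linearCombination (MvPolynomial σ k) g).restrictScalars k)

lemma mem_liftedForms {f : κ → MvPolynomial σ k} :
    f ∈ liftedForms d g b s m N ↔
      (∀ i, f i ∈ vanishingForms d (Finset.Ico s m) (m - b i)) ∧ ∑ i, f i * g i ∈ N := by
  simp [liftedForms, Fintype.linearCombination_apply]

/-- The values that the families in `liftedForms d g b s m N` take at the first `s` points. This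
finite-dimensional space determines `N` if `N` belongs to a point system containing all `g i`. -/
def liftedValues (d : ℕ → σ → k) (g : κ → MvPolynomial σ k) (b : κ → ℕ) (s m : ℕ)
    (N : Submodule k (MvPolynomial σ k)) : Submodule k (κ → Fin s → k) :=
  (liftedForms d g b s m N).map (evalFirst d s)

lemma liftedValues_mono (h : N ≤ N') : liftedValues d g b s m N ≤ liftedValues d g b s m N' :=
  Submodule.map_mono (inf_le_inf_left _ (Submodule.comap_mono h))

lemma exists_mem_liftedForms_sum_mul_eq (ho : ∀ j, d j o = 1)
    (he : Function.Injective fun j => d j e) (hg : ∀ i, (g i).IsHomogeneous (b i))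
    (hgs : ∀ i, ∀ j ≥ s, eval (d j) (g i) ≠ 0) (hb : ∀ i i', b i + b i' ≤ s) (hsm : s ≤ m)
    {F : MvPolynomial σ k} (hFN : F ∈ N) (hF : F ∈ vanishingForms d (Finset.range m) m)
    (hFg : F ∈ Ideal.span (Set.range g)) :
    ∃ f ∈ liftedForms d g b s m N, ∑ i, f i * g i = F := by
  obtain ⟨hFh, hFd⟩ := mem_vanishingForms.mp hF
  rcases isEmpty_or_nonempty κ with _ | ⟨⟨i₀⟩⟩
  · rw [Set.range_eq_empty, Ideal.span_empty, Ideal.mem_bot] at hFg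
    exact ⟨0, zero_mem _, by simp [hFg]⟩
  obtain ⟨f, hf, rfl⟩ := exists_isHomogeneous_eq_sum_mul hg
    (fun i => (Nat.le_add_right _ _).trans ((hb i i).trans hsm)) hFh hFg
  obtain ⟨f', hf', hff'⟩ := exists_vanishingForms_sum_mul_eq (T := Finset.Ico s m) ho he.injOn hg hf
    (fun j hj => ⟨i₀, hgs i₀ j (Finset.mem_Ico.mp hj).1⟩)
    (fun j hj => hFd j (Finset.mem_range.mpr (Finset.mem_Ico.mp hj).2))
    (fun i i' => by have := hb i i'; rw [Nat.card_Ico]; omega)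
  exact ⟨f', mem_liftedForms.mpr ⟨hf', hff' ▸ hFN⟩, hff'⟩

theorem IsPointSystem.le_of_liftedValues_le [Finite σ] {M : ℕ → Submodule k (MvPolynomial σ k)}
    (hM : IsPointSystem d o M) (ho : ∀ j, d j o = 1) (he : Function.Injective fun j => d j e)
    (hg : ∀ i, g i ∈ M (b i)) (hgs : ∀ i, ∀ j ≥ s, eval (d j) (g i) ≠ 0)
    (hb : ∀ i i', b i + b i' ≤ s) (hsm : s ≤ m) (hNd : N ≤ vanishingForms d (Finset.range m) m)
    (hNg : ∀ F ∈ N, F ∈ Ideal.span (Set.range g))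
    (hN : liftedValues d g b s m N ≤ liftedValues d g b s m (M m)) : N ≤ M m := by
  intro F hF
  have hgh : ∀ i, (g i).IsHomogeneous (b i) := fun i =>
    (mem_vanishingForms.mp (hM.le_vanishingForms _ (hg i))).1
  obtain ⟨f, hf, rfl⟩ :=
    exists_mem_liftedForms_sum_mul_eq ho he hgh hgs hb hsm hF (hNd hF) (hNg F hF)
  obtain ⟨f', hf', hev⟩ := hN (Submodule.mem_map_of_mem hf)
  rw [SetLike.mem_coe, mem_liftedForms] at hf'
  rw [mem_liftedForms] at hf
  have hdiff : ∀ i, (f i - f' i) * g i ∈ M m := fun i => by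
    have hbm : b i ≤ m := (Nat.le_add_right _ _).trans ((hb i i).trans hsm)
    rw [← Nat.add_sub_cancel' hbm]
    refine hM.mul_mem_of_mem_vanishingForms ho he (hg i) ?_
    obtain ⟨hh, hd⟩ := mem_vanishingForms.mp (sub_mem (hf.1 i) (hf'.1 i))
    refine mem_vanishingForms.mpr ⟨hh, fun j hj => ?_⟩
    rw [Nat.add_sub_cancel' hbm, Finset.mem_Ico] at hj
    rcases lt_or_ge j s with hjs | hjs
    · have h := congrFun₂ hev i ⟨j, hjs⟩
      simp only [evalFirst_apply] at h
      rw [map_sub, h, sub_self]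
    · exact hd j (Finset.mem_Ico.mpr ⟨hjs, hj.2⟩)
  have hsum : ∑ i, f i * g i = ∑ i, (f i - f' i) * g i + ∑ i, f' i * g i := by
    simp only [← Finset.sum_add_distrib, sub_mul, sub_add_cancel]
  rw [hsum]
  exact add_mem (sum_mem fun i _ => hdiff i) hf'.2

theorem finrank_liftedValues_le (ho : ∀ j, d j o = 1) (he : Function.Injective fun j => d j e)
    (hb : ∀ i, b i ≤ m) (hsm : s ≤ m) (hNN' : ∀ F ∈ N, linForm o (d m) e * F ∈ N') :
    Module.finrank k (liftedValues d g b s m N) ≤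
      Module.finrank k (liftedValues d g b s (m + 1) N') := by
  let v := linForm o (d m) e
  have hv : ∀ j, eval (d j) v = d j e - d m e := fun j => eval_linForm (ho j) _ _
  let φ : (κ → Fin s → k) →ₗ[k] κ → Fin s → k :=
    (LinearMap.pi fun j : Fin s => eval (d j) v • LinearMap.proj j).compLeft κ
  have hφ : Function.Injective φ := fun y z hyz => by
    ext i j
    refine mul_left_cancel₀ ?_ (congrFun₂ hyz i j)
    rw [hv, sub_ne_zero, he.ne_iff]
    exact (j.2.trans_le hsm).ne
  have hle : (liftedValues d g b s m N).map φ ≤ liftedValues d g b s (m + 1) N' := by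
    rintro _ ⟨_, ⟨f, hf, rfl⟩, rfl⟩
    obtain ⟨hfv, hfN⟩ := mem_liftedForms.mp hf
    refine ⟨fun i => v * f i, mem_liftedForms.mpr ⟨fun i => ?_, ?_⟩, ?_⟩
    · obtain ⟨hh, hd⟩ := mem_vanishingForms.mp (hfv i)
      refine mem_vanishingForms.mpr ⟨?_, fun j hj => ?_⟩
      · rw [show m + 1 - b i = 1 + (m - b i) by have := hb i; omega]
        exact (isHomogeneous_linForm o (d m) e).mul hh
      · rw [Finset.mem_Ico, Nat.lt_succ_iff_lt_or_eq] at hj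
        rcases hj with ⟨hsj, hjm | rfl⟩
        · rw [map_mul, hd j (Finset.mem_Ico.mpr ⟨hsj, hjm⟩), mul_zero]
        · rw [map_mul, hv, sub_self, zero_mul]
    · simpa only [mul_assoc, Finset.mul_sum] using hNN' _ hfN
    · ext i j
      simp [φ, evalFirst_apply]
  exact (Submodule.equivMapOfInjective φ hφ _).finrank_eq.trans_le (Submodule.finrank_mono hle)

end Lifts

section Stabilization

lemma exists_forall_eq_of_monotone_of_bounded {ρ : ℕ → ℕ → ℕ} (h₁ : ∀ m, Monotone fun n => ρ n m)
    (h₂ : ∀ n, Monotone (ρ n)) {D : ℕ} (hD : ∀ n m, ρ n m ≤ D) :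
    ∃ n₀ m₀, ∀ n ≥ n₀, ∀ m ≥ m₀, ρ n m = ρ n₀ m := by
  have hbdd : BddAbove (Set.range fun x : ℕ × ℕ => ρ x.1 x.2) :=
    ⟨D, by rintro _ ⟨x, rfl⟩; exact hD _ _⟩
  obtain ⟨⟨n₀, m₀⟩, hmax⟩ := Nat.sSup_mem (Set.range_nonempty _) hbdd
  refine ⟨n₀, m₀, fun n hn m hm => le_antisymm ?_ (h₁ m hn)⟩
  calc ρ n m ≤ ρ n₀ m₀ := (le_csSup hbdd ⟨(n, m), rfl⟩).trans_eq hmax.symm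
    _ ≤ ρ n₀ m := h₂ n₀ hm

lemma exists_forall_eq_of_monotone_of_le_fg {R M : Type*} [Ring R] [IsNoetherianRing R]
    [AddCommGroup M] [Module R M] {V : Submodule R M} (hV : V.FG) {N : ℕ → Submodule R M}
    (hN : Monotone N) (hNV : ∀ n, N n ≤ V) : ∃ c, ∀ n ≥ c, N n = N c := by
  have := isNoetherian_of_fg_of_noetherian V hV
  obtain ⟨c, hc⟩ := monotone_stabilizes_iff_noetherian.mpr this
    ⟨fun n => (N n).comap V.subtype, fun _ _ h => Submodule.comap_mono (hN h)⟩
  refine ⟨c, fun n hn => ?_⟩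
  have h : (N n).comap V.subtype = (N c).comap V.subtype := (hc n hn).symm
  simpa only [Submodule.map_comap_subtype, inf_eq_right.mpr (hNV _)] using
    congrArg (Submodule.map V.subtype) h

variable {k σ : Type*} [Field k] [Finite σ] {d : ℕ → σ → k} {o e : σ}
  {N : ℕ → ℕ → Submodule k (MvPolynomial σ k)}

lemma exists_finset_forall_mem_span (hd : IsCriticallyDense d)
    (hN : ∀ n m, N n m ≤ homogeneousSubmodule σ k m) (hmono : ∀ m, Monotone fun n => N n m) :
    ∃ (G : Finset (MvPolynomial σ k)) (b : G → ℕ) (n₀ s : ℕ),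
      (∀ n ≥ n₀, ∀ g : G, (g : MvPolynomial σ k) ∈ N n (b g)) ∧
      (∀ g : G, ∀ j ≥ s, eval (d j) (g : MvPolynomial σ k) ≠ 0) ∧
      (∀ g g', b g + b g' ≤ s) ∧
      ∀ n m, ∀ F ∈ N n m, F ∈ Ideal.span (Set.range ((↑) : G → MvPolynomial σ k)) := by
  let G₀ : Set (MvPolynomial σ k) := {F | F ≠ 0 ∧ ∃ n b, F ∈ N n b}
  obtain ⟨G, hGG₀, hspan⟩ := (Submodule.fg_span_iff_fg_span_finset_subset G₀).mp
    (IsNoetherian.noetherian (Ideal.span G₀))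
  choose hG0 ν b hνb using fun g : G => hGG₀ g.2
  have hs : ∀ᶠ s in Filter.atTop, (∀ g : G, ∀ j ≥ s, eval (d j) (g : MvPolynomial σ k) ≠ 0) ∧
      ∀ g g', b g + b g' ≤ s := by
    refine .and (Filter.eventually_all.mpr fun g => Filter.eventually_forall_ge_atTop.mpr ?_)
      (Filter.eventually_all.mpr fun g => Filter.eventually_all.mpr fun g' =>
        Filter.eventually_ge_atTop _)
    simpa [← Nat.cofinite_eq_atTop, Filter.eventually_cofinite] using
      hd (b g) g (hN _ _ (hνb g)) (hG0 g)
  obtain ⟨s, hGs, hbs⟩ := hs.exists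
  refine ⟨G, b, Finset.univ.sup ν, s, fun n hn g =>
    hmono _ ((Finset.le_sup (Finset.mem_univ g)).trans hn) (hνb g), hGs, hbs, fun n m F hF => ?_⟩
  rcases eq_or_ne F 0 with rfl | hF0
  · exact zero_mem _
  · rw [Subtype.range_coe_subtype, Finset.setOfPred_mem]
    exact (congrArg (F ∈ ·) hspan).mp (Submodule.subset_span ⟨hF0, n, m, hF⟩)

theorem exists_forall_le_of_isPointSystem (ho : ∀ j, d j o = 1)
    (he : Function.Injective fun j => d j e) (hd : IsCriticallyDense d)
    (hN : ∀ n, IsPointSystem d o (N n)) (hmono : ∀ m, Monotone fun n => N n m) :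
    ∃ n₀, ∀ n ≥ n₀, ∀ m, N n m ≤ N n₀ m := by
  obtain ⟨G, b, n₁, s, hG, hGs, hb, hspan⟩ := exists_finset_forall_mem_span hd
    (fun n m => ((hN n).le_vanishingForms m).trans inf_le_left) hmono
  let Q (n m : ℕ) := liftedValues d (Subtype.val : G → MvPolynomial σ k) b s m (N n m)
  have hQmono : ∀ m, Monotone fun n => Q n m := fun m n n' h => liftedValues_mono (hmono m h)
  have hbs : ∀ g, b g ≤ s := fun g => (Nat.le_add_right _ _).trans (hb g g)
  have hNd : ∀ n m, N n m ≤ vanishingForms d (Finset.range m) m := fun n =>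
    (hN n).le_vanishingForms
  obtain ⟨n₂, m₂, hstab⟩ := exists_forall_eq_of_monotone_of_bounded
    (ρ := fun n m => Module.finrank k (Q n (s + m)))
    (fun m n n' h => Submodule.finrank_mono (hQmono _ h))
    (fun n => monotone_nat_of_le_succ fun m => finrank_liftedValues_le ho he
      (fun g => (hbs g).trans (Nat.le_add_right _ _)) (Nat.le_add_right _ _)
      fun F hF => (hN n).linForm_mul_mem _ F hF e)
    (fun n m => Submodule.finrank_le _)
  have hlow : ∀ m, ∃ c, ∀ n ≥ c, N n m = N c m := fun m =>
    exists_forall_eq_of_monotone_of_le_fg (V := homogeneousSubmodule σ k m)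
      (homogeneousSubmodule_fg σ k m) (hmono m) fun n => (hNd n m).trans inf_le_left
  choose c hc using hlow
  refine ⟨max (max n₁ n₂) ((Finset.range (s + m₂)).sup c), fun n hn m => ?_⟩
  have hn' : max n₁ n₂ ≤ n := (le_max_left _ _).trans hn
  rcases lt_or_ge m (s + m₂) with hm | hm
  · have hcm := Finset.le_sup (f := c) (Finset.mem_range.mpr hm)
    rw [hc m n (hcm.trans ((le_max_right _ _).trans hn))]
    exact hmono m (hcm.trans (le_max_right _ _))
  · obtain ⟨r, rfl⟩ := Nat.exists_eq_add_of_le ((Nat.le_add_right _ _).trans hm)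
    have hr := hstab _ ((le_max_right n₁ n₂).trans hn') r (by omega)
    have hr' := hstab _ (le_max_right n₁ n₂) r (by omega)
    refine ((hN _).le_of_liftedValues_le ho he (hG _ (le_max_left n₁ n₂)) hGs hb
      (Nat.le_add_right _ _) (hNd n _) (hspan n _) ?_).trans (hmono _ (le_max_left _ _))
    exact (Submodule.eq_of_le_of_finrank_eq (hQmono _ hn') (hr'.trans hr.symm)).ge

end Stabilization

section Degreewise

variable {R S σ M : Type*} [CommSemiring R] [CommSemiring S] [AddCommMonoid M] [Module R M]

theorem isHomogeneous_induction {P : MvPolynomial σ R → Prop} (F : MvPolynomial σ R)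
    (homogeneous : ∀ m F, F.IsHomogeneous m → P F) (add : ∀ F G, P F → P G → P (F + G)) : P F :=
  MvPolynomial.induction_on' F (fun _ c => homogeneous _ _ (isHomogeneous_monomial c rfl)) add

/-- The linear map which is given by `L m` on the forms of degree `m`. -/
def degreewise (L : ℕ → MvPolynomial σ R →ₗ[R] M) : MvPolynomial σ R →ₗ[R] M :=
  (basisMonomials σ R).constr R fun a => L a.degree (monomial a 1)

lemma degreewise_of_isHomogeneous (L : ℕ → MvPolynomial σ R →ₗ[R] M) {m : ℕ}
    {F : MvPolynomial σ R} (hF : F.IsHomogeneous m) : degreewise L F = L m F := by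
  have h : ∀ a ∈ F.support,
      degreewise L (monomial a (coeff a F)) = L m (monomial a (coeff a F)) := by
    intro a ha
    have hL : degreewise L (monomial a 1) = L a.degree (monomial a 1) :=
      (basisMonomials σ R).constr_basis R _ a
    have ham : a.degree = m := (hF.degree_eq_sum_deg_support ha).symm
    rw [← mul_one (coeff a F), ← smul_eq_mul, ← smul_monomial, map_smul, map_smul, hL, ham]
  rw [F.as_sum, map_sum, map_sum, Finset.sum_congr rfl h]

lemma homogeneousComponent_apply_of_forall_isHomogeneous
    {φ : MvPolynomial σ R →ₗ[R] MvPolynomial σ R}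
    (hφ : ∀ n F, F.IsHomogeneous n → (φ F).IsHomogeneous n) (m : ℕ) (F : MvPolynomial σ R) :
    homogeneousComponent m (φ F) = φ (homogeneousComponent m F) := by
  induction F using isHomogeneous_induction with
  | homogeneous n F hF =>
    rw [homogeneousComponent_of_mem (hφ n F hF), homogeneousComponent_of_mem hF, apply_ite φ,
      map_zero]
  | add F G hF hG => simp only [map_add, hF, hG]

lemma map_homogeneousComponent (g : R →+* S) (F : MvPolynomial σ R) (m : ℕ) :
    map g (homogeneousComponent m F) = homogeneousComponent m (map g F) := by
  ext a
  simp only [coeff_map, coeff_homogeneousComponent, apply_ite g, map_zero]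

/-- The algebra endomorphism that multiplies each variable `X i` by `u i`. -/
def scaleVars (u : σ → R) : MvPolynomial σ R →ₐ[R] MvPolynomial σ R :=
  aeval fun i => C (u i) * X i

@[simp]
lemma scaleVars_X (u : σ → R) (i : σ) : scaleVars u (X i) = C (u i) * X i :=
  aeval_X _ i

lemma eval_scaleVars (u x : σ → R) (F : MvPolynomial σ R) :
    eval x (scaleVars u F) = eval (u * x) F := by
  induction F using MvPolynomial.induction_on with
  | C r => simp
  | add F G hF hG => simp [hF, hG]
  | mul_X F i hF => simp [hF]

lemma map_scaleVars (g : R →+* S) (u : σ → R) (F : MvPolynomial σ R) :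
    map g (scaleVars u F) = scaleVars (g ∘ u) (map g F) := by
  induction F using MvPolynomial.induction_on with
  | C r => simp
  | add F G hF hG => simp [hF, hG]
  | mul_X F i hF => simp [hF]

lemma scaleVars_scaleVars (u v : σ → R) (F : MvPolynomial σ R) :
    scaleVars u (scaleVars v F) = scaleVars (u * v) F := by
  have h : (scaleVars u).comp (scaleVars v) = scaleVars (u * v) :=
    algHom_ext fun i => by simp [mul_comm, mul_left_comm]
  exact DFunLike.congr_fun h F

lemma scaleVars_one (F : MvPolynomial σ R) : scaleVars 1 F = F := by
  simp [scaleVars]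

lemma isHomogeneous_scaleVars (u : σ → R) {F : MvPolynomial σ R} {m : ℕ} (hF : F.IsHomogeneous m) :
    (scaleVars u F).IsHomogeneous m := by
  have h := hF.aeval (n := 1) (fun i => C (u i) * X i) fun i => isHomogeneous_C_mul_X (u i) i
  rwa [one_mul] at h

end Degreewise

section TwistedMultiplication

variable {R S σ : Type*} [CommRing R] [CommRing S] (p : σ → Rˣ)

/-- The point `p ^ n` of the orbit of `1` under multiplication by `p`. -/
def orbitPoint (n : ℤ) : σ → R := fun i => ↑(p i ^ n)

lemma orbitPoint_add (a b : ℤ) : orbitPoint p (a + b) = orbitPoint p a * orbitPoint p b :=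
  funext fun i => by simp [orbitPoint, zpow_add]

@[simp]
lemma orbitPoint_zero : orbitPoint p 0 = 1 :=
  funext fun i => by simp [orbitPoint]

lemma orbitPoint_inv (n : ℤ) : orbitPoint p⁻¹ n = orbitPoint p (-n) :=
  funext fun i => by simp [orbitPoint]

lemma orbitPoint_natCast (n : ℕ) (i : σ) : orbitPoint p n i = p i ^ n := by
  simp [orbitPoint]

/-- The product `F * G` in which `F` is replaced by `F (p ^ (-b) * X)` when `G` is a form of degree
`b`. It corresponds to the composition of the operators `F (p ^ n) : T n ↦ T (n - deg F)`. -/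
def twistedMul : MvPolynomial σ R →ₗ[R] MvPolynomial σ R →ₗ[R] MvPolynomial σ R :=
  (degreewise fun b =>
    ((LinearMap.mul R (MvPolynomial σ R)).comp
      (scaleVars (orbitPoint p (-b))).toLinearMap).flip).flip

lemma twistedMul_of_isHomogeneous (F : MvPolynomial σ R) {G : MvPolynomial σ R} {b : ℕ}
    (hG : G.IsHomogeneous b) : twistedMul p F G = scaleVars (orbitPoint p (-b)) F * G := by
  simp [twistedMul, degreewise_of_isHomogeneous _ hG]

theorem homogeneousComponent_twistedMul (F G : MvPolynomial σ R) (m : ℕ) :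
    homogeneousComponent m (twistedMul p F G) =
      ∑ x ∈ Finset.HasAntidiagonal.antidiagonal m,
        scaleVars (orbitPoint p (-x.2)) (homogeneousComponent x.1 F) *
          homogeneousComponent x.2 G := by
  induction F using isHomogeneous_induction with
  | add F F' hF hF' =>
    simp only [map_add, LinearMap.add_apply, add_mul, Finset.sum_add_distrib, hF, hF']
  | homogeneous a F hF =>
    induction G using isHomogeneous_induction with
    | add G G' hG hG' => simp only [map_add, mul_add, Finset.sum_add_distrib, hG, hG']
    | homogeneous b G hG =>
      have h : ∀ x : ℕ × ℕ, scaleVars (orbitPoint p (-x.2)) (homogeneousComponent x.1 F) *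
          homogeneousComponent x.2 G = if x = (a, b) then twistedMul p F G else 0 := fun x => by
        simp only [homogeneousComponent_of_mem hF, homogeneousComponent_of_mem hG, Prod.ext_iff]
        split_ifs <;> simp_all [twistedMul_of_isHomogeneous p F hG]
      simp_rw [h, Finset.sum_ite_eq', Finset.HasAntidiagonal.mem_antidiagonal]
      rw [twistedMul_of_isHomogeneous p F hG,
        homogeneousComponent_of_mem ((isHomogeneous_scaleVars _ hF).mul hG)]
      simp only [eq_comm]

lemma homogeneousComponent_add_twistedMul {F : MvPolynomial σ R} {a : ℕ} (hF : F.IsHomogeneous a)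
    (G : MvPolynomial σ R) (m : ℕ) :
    homogeneousComponent (m + a) (twistedMul p F G) =
      scaleVars (orbitPoint p (-m)) F * homogeneousComponent m G := by
  rw [homogeneousComponent_twistedMul, Finset.sum_eq_single (a, m),
    homogeneousComponent_eq_self hF]
  · intro x hx hne
    rw [homogeneousComponent_of_mem hF, if_neg, map_zero, zero_mul]
    rintro rfl
    exact hne (Prod.ext rfl (by have := Finset.HasAntidiagonal.mem_antidiagonal.mp hx; omega))
  · exact fun h => absurd (Finset.HasAntidiagonal.mem_antidiagonal.mpr (Nat.add_comm a m)) h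

lemma map_twistedMul (g : R →+* S) (F G : MvPolynomial σ R) :
    map g (twistedMul p F G) =
      twistedMul (fun i => Units.map g.toMonoidHom (p i)) (map g F) (map g G) := by
  induction G using isHomogeneous_induction with
  | homogeneous b G hG =>
    rw [twistedMul_of_isHomogeneous p F hG, twistedMul_of_isHomogeneous _ _ (hG.map g), map_mul,
      map_scaleVars]
    congr 3
    ext i
    simp [orbitPoint]
  | add G G' hG hG' => simp only [map_add, hG, hG']

/-- The linear automorphism `F ↦ F (p ^ (m - 1) * X)` on forms `F` of degree `m`, which turns the
opposite of the multiplication twisted by `p` into the multiplication twisted by `p⁻¹`. -/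
def untwist : MvPolynomial σ R →ₗ[R] MvPolynomial σ R :=
  degreewise fun m => (scaleVars (orbitPoint p (m - 1))).toLinearMap

lemma untwist_of_isHomogeneous {F : MvPolynomial σ R} {m : ℕ} (hF : F.IsHomogeneous m) :
    untwist p F = scaleVars (orbitPoint p (m - 1)) F :=
  degreewise_of_isHomogeneous _ hF

lemma isHomogeneous_untwist {F : MvPolynomial σ R} {m : ℕ} (hF : F.IsHomogeneous m) :
    (untwist p F).IsHomogeneous m :=
  untwist_of_isHomogeneous p hF ▸ isHomogeneous_scaleVars _ hF

lemma untwist_inv_untwist (F : MvPolynomial σ R) : untwist p⁻¹ (untwist p F) = F := by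
  induction F using isHomogeneous_induction with
  | homogeneous m F hF =>
    rw [untwist_of_isHomogeneous _ (isHomogeneous_untwist p hF), untwist_of_isHomogeneous p hF,
      scaleVars_scaleVars, orbitPoint_inv, ← orbitPoint_add, neg_add_cancel, orbitPoint_zero,
      scaleVars_one]
  | add F G hF hG => rw [map_add, map_add, hF, hG]

theorem untwist_twistedMul (F G : MvPolynomial σ R) :
    untwist p (twistedMul p F G) = twistedMul p⁻¹ (untwist p G) (untwist p F) := by
  induction F using isHomogeneous_induction with
  | add F F' hF hF' => simp only [map_add, LinearMap.add_apply, hF, hF']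
  | homogeneous a F hF =>
    induction G using isHomogeneous_induction with
    | add G G' hG hG' => simp only [map_add, LinearMap.add_apply, hG, hG']
    | homogeneous b G hG =>
      rw [twistedMul_of_isHomogeneous p F hG,
        untwist_of_isHomogeneous p ((isHomogeneous_scaleVars _ hF).mul hG),
        twistedMul_of_isHomogeneous _ _ (isHomogeneous_untwist p hF),
        untwist_of_isHomogeneous p hF, untwist_of_isHomogeneous p hG, map_mul,
        scaleVars_scaleVars, scaleVars_scaleVars, orbitPoint_inv, ← orbitPoint_add,
        ← orbitPoint_add, mul_comm]
      congr 4 <;> push_cast <;> ring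

end TwistedMultiplication

section TwistedRealizations

variable {R A σ : Type*} [CommRing R] [Ring A] [Algebra R A]

/-- A realization of an algebra `A` by polynomials, for which the multiplication is twisted by `p`,
the components of degree `m` vanish at the points `p ^ j` with `0 ≤ j < m`, and all forms
`X i - X o` occur; here `o` is a coordinate with `p o = 1`. -/
structure IsTwistedRealization (p : σ → Rˣ) (o : σ) (Ψ : A →ₗ[R] MvPolynomial σ R) : Prop where
  apply_eq_one : p o = 1
  apply_one : Ψ 1 = 1
  apply_mul : ∀ x y, Ψ (x * y) = twistedMul p (Ψ x) (Ψ y)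
  eval_eq_zero : ∀ x, ∀ m : ℕ, ∀ j < m,
    eval (orbitPoint p (j : ℤ)) (homogeneousComponent m (Ψ x)) = 0
  exists_eq_X_sub_X : ∀ i, ∃ x, Ψ x = X i - X o

namespace IsTwistedRealization

variable {p : σ → Rˣ} {o : σ} {Ψ : A →ₗ[R] MvPolynomial σ R}

lemma orbitPoint_eq_one (h : IsTwistedRealization p o Ψ) (n : ℤ) : orbitPoint p n o = 1 := by
  simp [orbitPoint, h.apply_eq_one]

theorem exists_scaleVars_eq_linForm (h : IsTwistedRealization p o Ψ) (i : σ) (m : ℕ) :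
    ∃ x, (Ψ x).IsHomogeneous 1 ∧
      scaleVars (orbitPoint p (-m)) (Ψ x) = linForm o (orbitPoint p m) i := by
  obtain ⟨x, hx⟩ := h.exists_eq_X_sub_X i
  have hx1 : (Ψ x).IsHomogeneous 1 := hx ▸ (isHomogeneous_X R i).sub (isHomogeneous_X R o)
  refine ⟨orbitPoint p m i • x, ?_, ?_⟩
  · rw [map_smul, smul_eq_C_mul]
    exact hx1.C_mul _
  · have hinv : orbitPoint p m i * orbitPoint p (-m) i = 1 := by
      simp [orbitPoint, ← mul_pow]
    rw [map_smul, map_smul, hx, map_sub, scaleVars_X, scaleVars_X, h.orbitPoint_eq_one, smul_sub,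
      smul_eq_C_mul, smul_eq_C_mul, ← mul_assoc, ← C_mul, hinv, C_1, one_mul, one_mul, linForm]

protected theorem op (h : IsTwistedRealization p o Ψ) :
    IsTwistedRealization (A := Aᵐᵒᵖ) p⁻¹ o
      (untwist p ∘ₗ Ψ ∘ₗ (MulOpposite.opLinearEquiv R).symm.toLinearMap) where
  apply_eq_one := by simp [h.apply_eq_one]
  apply_one := by simp [h.apply_one, untwist_of_isHomogeneous p (isHomogeneous_one σ R)]
  apply_mul x y := by simp [h.apply_mul, untwist_twistedMul]
  eval_eq_zero x m j hj := by
    have hcast : (m - 1 : ℤ) + -j = ((m - 1 - j : ℕ) : ℤ) := by omega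
    have hm := homogeneousComponent_isHomogeneous m (Ψ x.unop)
    simp only [LinearMap.comp_apply, LinearEquiv.coe_coe, MulOpposite.coe_opLinearEquiv_symm]
    rw [homogeneousComponent_apply_of_forall_isHomogeneous fun n F => isHomogeneous_untwist p,
      untwist_of_isHomogeneous p hm, eval_scaleVars, orbitPoint_inv, ← orbitPoint_add, hcast]
    exact h.eval_eq_zero _ _ _ (by omega)
  exists_eq_X_sub_X i := by
    obtain ⟨x, hx⟩ := h.exists_eq_X_sub_X i
    refine ⟨MulOpposite.op x, ?_⟩
    have hhom : (X i - X o : MvPolynomial σ R).IsHomogeneous 1 :=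
      (isHomogeneous_X R i).sub (isHomogeneous_X R o)
    simp [hx, untwist_of_isHomogeneous p hhom, scaleVars_one]

lemma op_injective (hΨ : Function.Injective Ψ) : Function.Injective
    (untwist p ∘ₗ Ψ ∘ₗ (MulOpposite.opLinearEquiv (M := A) R).symm.toLinearMap) :=
  (Function.LeftInverse.injective (untwist_inv_untwist p)).comp
    (hΨ.comp (MulOpposite.opLinearEquiv R).symm.injective)

end IsTwistedRealization

end TwistedRealizations

section TopForms

variable {R A σ : Type*} [CommRing R] [Ring A] [Algebra R A] {Ψ : A →ₗ[R] MvPolynomial σ R}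

/-- The leading forms: the components of degree `m` of the elements of the left ideal `J` whose
components of higher degree vanish. -/
def topForms (Ψ : A →ₗ[R] MvPolynomial σ R) (J : Submodule A A) (m : ℕ) :
    Submodule R (MvPolynomial σ R) :=
  (J.restrictScalars R ⊓ ⨅ n > m, LinearMap.ker (homogeneousComponent n ∘ₗ Ψ)).map
    (homogeneousComponent m ∘ₗ Ψ)

lemma mem_topForms {J : Submodule A A} {m : ℕ} {F : MvPolynomial σ R} :
    F ∈ topForms Ψ J m ↔ ∃ a ∈ J, (∀ n > m, homogeneousComponent n (Ψ a) = 0) ∧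
      homogeneousComponent m (Ψ a) = F := by
  simp [topForms, Submodule.mem_iInf, and_assoc]

lemma topForms_mono (m : ℕ) : Monotone fun J : Submodule A A => topForms Ψ J m :=
  fun _ _ h => Submodule.map_mono (inf_le_inf_right _ h)

theorem le_of_topForms_le (hΨ : Function.Injective Ψ) {J J' : Submodule A A} (hJ : J ≤ J')
    (h : ∀ m, topForms Ψ J' m ≤ topForms Ψ J m) : J' ≤ J := by
  suffices key : ∀ M, ∀ a ∈ J', (∀ m ≥ M, homogeneousComponent m (Ψ a) = 0) → a ∈ J from
    fun a ha => key _ a ha fun m hm => homogeneousComponent_eq_zero _ _ (Nat.succ_le_iff.mp hm)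
  intro M
  induction M with
  | zero =>
    intro a _ ha
    have h0 : Ψ a = 0 := by
      rw [← sum_homogeneousComponent (Ψ a)]
      exact Finset.sum_eq_zero fun m _ => ha m (Nat.zero_le m)
    rw [(map_eq_zero_iff Ψ hΨ).mp h0]
    exact zero_mem J
  | succ M ih =>
    intro a ha haM
    obtain ⟨a', ha', hlt, htop⟩ := mem_topForms.mp (h M (mem_topForms.mpr ⟨a, ha, haM, rfl⟩))
    suffices hsub : a - a' ∈ J from by simpa using add_mem hsub ha'
    refine ih _ (sub_mem ha (hJ ha')) fun m hm => ?_
    rw [map_sub, map_sub, sub_eq_zero]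
    rcases hm.lt_or_eq with hm | rfl
    · rw [haM m hm, hlt m hm]
    · exact htop.symm

end TopForms

namespace IsTwistedRealization

variable {k A σ : Type*} [Field k] [Ring A] [Algebra k A] {p : σ → kˣ} {o e : σ}
  {Ψ : A →ₗ[k] MvPolynomial σ k}

theorem isPointSystem_topForms (h : IsTwistedRealization p o Ψ) (J : Submodule A A) :
    IsPointSystem (fun j : ℕ => orbitPoint p j) o (topForms Ψ J) where
  le_vanishingForms m F hF := by
    obtain ⟨a, _, _, rfl⟩ := mem_topForms.mp hF
    exact mem_vanishingForms.mpr ⟨homogeneousComponent_isHomogeneous _ _,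
      fun j hj => h.eval_eq_zero a m j (Finset.mem_range.mp hj)⟩
  linForm_mul_mem m F hF i := by
    obtain ⟨a, ha, hlt, rfl⟩ := mem_topForms.mp hF
    obtain ⟨x, hx, hxm⟩ := h.exists_scaleVars_eq_linForm i m
    refine mem_topForms.mpr ⟨x * a, J.smul_mem x ha, fun n hn => ?_, ?_⟩
    · obtain ⟨n, rfl⟩ := Nat.exists_eq_add_of_lt (Nat.zero_lt_of_lt hn)
      rw [h.apply_mul, homogeneousComponent_add_twistedMul p hx, hlt _ (by omega), mul_zero]
    · rw [h.apply_mul, homogeneousComponent_add_twistedMul p hx, hxm]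

theorem isNoetherianRing [Finite σ] (h : IsTwistedRealization p o Ψ) (hΨ : Function.Injective Ψ)
    (he : ¬IsOfFinOrder (p e)) (hd : IsCriticallyDense fun j : ℕ => orbitPoint p j) :
    IsNoetherianRing A := by
  have he' : Function.Injective fun j : ℕ => orbitPoint p j e := fun a b hab =>
    injective_pow_iff_not_isOfFinOrder.mpr he (Units.ext (by simpa [orbitPoint] using hab))
  refine monotone_stabilizes_iff_noetherian.mp fun J => ?_
  obtain ⟨n₀, hn₀⟩ := exists_forall_le_of_isPointSystem (fun j => h.orbitPoint_eq_one j) he' hd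
    (fun n => h.isPointSystem_topForms (J n)) fun m _ _ hn => topForms_mono m (J.monotone hn)
  exact ⟨n₀, fun n hn => (J.monotone hn).antisymm
    (le_of_topForms_le hΨ (J.monotone hn) (hn₀ n hn))⟩

end IsTwistedRealization

section OrbitAction

open LaurentPolynomial

variable {R σ : Type*} [CommRing R] (p : σ → Rˣ)

/-- The action of polynomials on Laurent polynomials for which a form `F` of degree `m` maps `T n`
to `F (p ^ n) • T (n - m)`. -/
def orbitAction : MvPolynomial σ R →ₗ[R] Module.End R R[T;T⁻¹] :=
  degreewise fun m => ((AddMonoidAlgebra.basis ℤ R).constr R).toLinearMap ∘ₗ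
    LinearMap.pi fun n => (aeval (orbitPoint p n)).toLinearMap.smulRight (T (n - m))

lemma orbitAction_apply_T {F : MvPolynomial σ R} {m : ℕ} (hF : F.IsHomogeneous m) (n : ℤ) :
    orbitAction p F (T n) = eval (orbitPoint p n) F • T (n - m) := by
  have h := (AddMonoidAlgebra.basis ℤ R).constr_basis R
    (fun n : ℤ => aeval (orbitPoint p n) F • (T (n - m) : R[T;T⁻¹])) n
  rw [orbitAction, degreewise_of_isHomogeneous _ hF, ← aeval_eq_eval]
  exact h

theorem orbitAction_twistedMul (F G : MvPolynomial σ R) :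
    orbitAction p (twistedMul p F G) = orbitAction p F * orbitAction p G := by
  induction F using isHomogeneous_induction with
  | add F F' hF hF' => simp only [map_add, LinearMap.add_apply, add_mul, hF, hF']
  | homogeneous a F hF =>
    induction G using isHomogeneous_induction with
    | add G G' hG hG' => simp only [map_add, mul_add, hG, hG']
    | homogeneous b G hG =>
      refine (AddMonoidAlgebra.basis ℤ R).ext fun n => ?_
      change orbitAction p (twistedMul p F G) (T n) = orbitAction p F (orbitAction p G (T n))
      rw [twistedMul_of_isHomogeneous p F hG, orbitAction_apply_T p hG, map_smul,
        orbitAction_apply_T p hF, orbitAction_apply_T p ((isHomogeneous_scaleVars _ hF).mul hG),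
        eval_mul, eval_scaleVars, ← orbitPoint_add, smul_smul, mul_comm, neg_add_eq_sub]
      congr 2
      push_cast
      ring

lemma orbitAction_C (r : R) : orbitAction p (C r) = algebraMap R (Module.End R R[T;T⁻¹]) r := by
  refine (AddMonoidAlgebra.basis ℤ R).ext fun n => ?_
  change orbitAction p (C r) (T n) = r • T n
  rw [orbitAction_apply_T p (isHomogeneous_C σ r), eval_C, Nat.cast_zero, sub_zero]

lemma coeff_orbitAction_apply_T (F : MvPolynomial σ R) (m : ℕ) (n : ℤ) :
    (orbitAction p F (T n)).coeff (n - m) = eval (orbitPoint p n) (homogeneousComponent m F) := by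
  induction F using isHomogeneous_induction with
  | add F G hF hG =>
    simp only [map_add, LinearMap.add_apply, AddMonoidAlgebra.coeff_add, Finsupp.add_apply, hF, hG]
  | homogeneous a F hF =>
    rw [orbitAction_apply_T p hF, homogeneousComponent_of_mem hF, AddMonoidAlgebra.coeff_smul,
      Finsupp.smul_apply, T_apply]
    rcases eq_or_ne m a with rfl | hma
    · simp
    · simp [hma, hma.symm]

theorem orbitAction_injective (hd : IsCriticallyDense fun j : ℕ => orbitPoint p j) :
    Function.Injective (orbitAction p) := by
  refine (injective_iff_map_eq_zero _).mpr fun F hF => ?_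
  rw [← sum_homogeneousComponent F]
  refine Finset.sum_eq_zero fun m _ => ?_
  by_contra hne
  refine Set.infinite_univ (α := ℕ)
    ((hd m _ (homogeneousComponent_isHomogeneous m F) hne).subset fun n _ => ?_)
  simp [← coeff_orbitAction_apply_T, hF]

/-- The algebra of the operators by which those polynomials act whose components of degree `m`
vanish at the points `p ^ j` with `0 ≤ j < m`. -/
def orbitAlgebra : Subalgebra R (Module.End R R[T;T⁻¹]) where
  carrier := {f | ∃ F, (∀ m : ℕ, ∀ j < m,
    eval (orbitPoint p (j : ℤ)) (homogeneousComponent m F) = 0) ∧ orbitAction p F = f}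
  algebraMap_mem' r := by
    refine ⟨C r, fun m j hj => ?_, orbitAction_C p r⟩
    rw [homogeneousComponent_of_mem (isHomogeneous_C σ r), if_neg (Nat.ne_zero_of_lt hj), map_zero]
  add_mem' := by
    rintro _ _ ⟨F, hF, rfl⟩ ⟨G, hG, rfl⟩
    exact ⟨F + G, fun m j hj => by rw [map_add, map_add, hF m j hj, hG m j hj, add_zero],
      map_add _ F G⟩
  mul_mem' := by
    rintro _ _ ⟨F, hF, rfl⟩ ⟨G, hG, rfl⟩
    refine ⟨twistedMul p F G, fun m j hj => ?_, orbitAction_twistedMul p F G⟩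
    rw [homogeneousComponent_twistedMul, map_sum]
    refine Finset.sum_eq_zero fun x hx => ?_
    have hxm := Finset.HasAntidiagonal.mem_antidiagonal.mp hx
    rw [eval_mul, eval_scaleVars, ← orbitPoint_add]
    rcases lt_or_ge j x.2 with h | h
    · rw [hG _ _ h, mul_zero]
    · have hsub : -(x.2 : ℤ) + j = (j - x.2 : ℕ) := by omega
      rw [hsub, hF _ _ (by omega), zero_mul]

variable {p}

theorem exists_isTwistedRealization_of_le_orbitAlgebra
    (hinj : Function.Injective (orbitAction p)) {o : σ} (ho : p o = 1)
    {A : Subalgebra R (Module.End R R[T;T⁻¹])} (hA : A ≤ orbitAlgebra p)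
    (hX : ∀ i, orbitAction p (X i - X o) ∈ A) :
    ∃ Ψ : A →ₗ[R] MvPolynomial σ R, IsTwistedRealization p o Ψ ∧ Function.Injective Ψ := by
  have hrange : ∀ x : A, (x : Module.End R R[T;T⁻¹]) ∈ LinearMap.range (orbitAction p) :=
    fun x => (hA x.2).imp fun _ h => h.2
  let e := LinearEquiv.ofInjective (orbitAction p) hinj
  let Ψ : A →ₗ[R] MvPolynomial σ R :=
    e.symm.toLinearMap ∘ₗ A.val.toLinearMap.codRestrict (LinearMap.range (orbitAction p)) hrange
  have hΨ : ∀ x : A, orbitAction p (Ψ x) = x := fun x =>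
    congrArg Subtype.val (e.apply_symm_apply ⟨x, hrange x⟩)
  have hΨ_eq : ∀ {x : A} {F}, orbitAction p F = x → Ψ x = F := fun hF => hinj ((hΨ _).trans hF.symm)
  refine ⟨Ψ, ⟨ho, ?_, fun x y => ?_, fun x => ?_, fun i => ⟨⟨_, hX i⟩, hΨ_eq rfl⟩⟩,
    fun x y hxy => Subtype.ext ?_⟩
  · exact hΨ_eq (by rw [← C_1, orbitAction_C, map_one, OneMemClass.coe_one])
  · exact hΨ_eq (by rw [orbitAction_twistedMul, hΨ, hΨ, MulMemClass.coe_mul])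
  · obtain ⟨F, hF, hFx⟩ := hA x.2
    rwa [hΨ_eq hFx]
  · rw [← hΨ x, ← hΨ y, hxy]

end OrbitAction

section EulerianDerivatives

open LaurentPolynomial

/-- The family `p` together with an additional member `1`. -/
def consOne {M τ : Type*} [One M] (p : τ → M) : Option τ → M :=
  fun i => i.elim 1 p

variable {k τ : Type*} [Field k] {p : τ → kˣ} {D : τ → Module.End k k[T;T⁻¹]}

lemma orbitAction_X_some_sub_X_none (hp1 : ∀ i, p i ≠ 1)
    (hD : ∀ i, ∀ n : ℤ, D i (T n) = (((p i : k) ^ n - 1) / (p i - 1)) • T (n - 1)) (i : τ) :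
    orbitAction (consOne p) (X (some i) - X none) = ((p i : k) - 1) • D i := by
  refine (AddMonoidAlgebra.basis ℤ k).ext fun n => ?_
  change orbitAction (consOne p) (X (some i) - X none) (T n) = ((p i : k) - 1) • D i (T n)
  have hpi : (p i : k) - 1 ≠ 0 := sub_ne_zero.mpr (mt Units.val_eq_one.mp (hp1 i))
  rw [orbitAction_apply_T _ ((isHomogeneous_X k _).sub (isHomogeneous_X k _)), hD, smul_smul,
    mul_div_cancel₀ _ hpi]
  simp [orbitPoint, consOne]

theorem exists_isTwistedRealization_adjoin (hp1 : ∀ i, p i ≠ 1)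
    (hd : IsCriticallyDense fun j : ℕ => orbitPoint (consOne p) j)
    (hD : ∀ i, ∀ n : ℤ, D i (T n) = (((p i : k) ^ n - 1) / (p i - 1)) • T (n - 1)) :
    ∃ Ψ : Algebra.adjoin k (Set.range D) →ₗ[k] MvPolynomial (Option τ) k,
      IsTwistedRealization (consOne p) none Ψ ∧ Function.Injective Ψ := by
  refine exists_isTwistedRealization_of_le_orbitAlgebra (orbitAction_injective _ hd) rfl
    (Algebra.adjoin_le ?_) fun i => ?_
  · rintro _ ⟨i, rfl⟩
    have hpi : (p i : k) - 1 ≠ 0 := sub_ne_zero.mpr (mt Units.val_eq_one.mp (hp1 i))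
    have hmem : orbitAction (consOne p) (X (some i) - X none) ∈ orbitAlgebra (consOne p) := by
      refine ⟨_, fun m j hj => ?_, rfl⟩
      rw [homogeneousComponent_of_mem ((isHomogeneous_X k _).sub (isHomogeneous_X k _))]
      split_ifs with hm
      · obtain rfl : j = 0 := by omega
        simp
      · exact map_zero _
    rw [← inv_smul_smul₀ hpi (D i), ← orbitAction_X_some_sub_X_none hp1 hD]
    exact Subalgebra.smul_mem _ hmem _
  · cases i with
    | none => simp
    | some i =>
      rw [orbitAction_X_some_sub_X_none hp1 hD]
      exact Subalgebra.smul_mem _ (Algebra.subset_adjoin (Set.mem_range_self i)) _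

end EulerianDerivatives

namespace IsTwistedRealization

section BaseChange

open scoped TensorProduct

variable {R A σ : Type*} [CommRing R] [Ring A] [Algebra R A] {p : σ → Rˣ} {o : σ}
  {Ψ : A →ₗ[R] MvPolynomial σ R}

protected theorem baseChange (B : Type*) [CommRing B] [Algebra R B]
    (h : IsTwistedRealization p o Ψ) :
    IsTwistedRealization (A := B ⊗[R] A) (fun i => Units.map (algebraMap R B).toMonoidHom (p i)) o
      ((algebraTensorAlgEquiv R B).toLinearMap ∘ₗ Ψ.baseChange B) where
  apply_eq_one := by rw [h.apply_eq_one, map_one]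
  apply_one := by simp [Algebra.TensorProduct.one_def, h.apply_one]
  apply_mul x y := by
    induction x using TensorProduct.induction_on with
    | zero => simp
    | add x x' hx hx' => simp only [add_mul, map_add, hx, hx', LinearMap.add_apply]
    | tmul b a =>
      induction y using TensorProduct.induction_on with
      | zero => simp
      | add y y' hy hy' => simp only [mul_add, map_add, hy, hy']
      | tmul b' a' =>
        simp [Algebra.TensorProduct.tmul_mul_tmul, h.apply_mul, map_twistedMul, smul_smul, mul_comm]
  eval_eq_zero x m j hj := by
    induction x using TensorProduct.induction_on with
    | zero => simp
    | add x y hx hy => rw [map_add, map_add, map_add, hx, hy, add_zero]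
    | tmul b a =>
      have hpoint : orbitPoint (fun i => Units.map (algebraMap R B).toMonoidHom (p i)) j =
          algebraMap R B ∘ orbitPoint p (j : ℤ) := funext fun i => by simp [orbitPoint]
      rw [LinearMap.comp_apply, LinearMap.baseChange_tmul, AlgEquiv.toLinearMap_apply,
        algebraTensorAlgEquiv_tmul, map_smul, ← map_homogeneousComponent, smul_eval, hpoint,
        ← MvPolynomial.map_eval, h.eval_eq_zero a m j hj, map_zero, mul_zero]
  exists_eq_X_sub_X i := by
    obtain ⟨x, hx⟩ := h.exists_eq_X_sub_X i
    exact ⟨1 ⊗ₜ x, by simp [hx]⟩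

end BaseChange

section VanishingIdeal

variable {R A σ : Type*} [CommRing R] [Ring A] [Algebra R A] {p : σ → Rˣ} {o : σ}
  {Ψ : A →ₗ[R] MvPolynomial σ R}

/-- The left ideal of the elements all of whose components vanish at the point `q`. -/
def vanishingIdeal (h : IsTwistedRealization p o Ψ) (q : σ → R) : Ideal A where
  carrier := {y | ∀ m, eval q (homogeneousComponent m (Ψ y)) = 0}
  zero_mem' m := by simp
  add_mem' hx hy m := by rw [map_add, map_add, map_add, hx m, hy m, add_zero]
  smul_mem' s y hy m := by
    rw [smul_eq_mul, h.apply_mul, homogeneousComponent_twistedMul, map_sum]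
    exact Finset.sum_eq_zero fun x _ => by rw [map_mul, hy x.2, mul_zero]

-- The left factors have positive degree, so they vanish at `p ^ j`, and only their derivatives
-- contribute; the right factors vanish at `q`, which is congruent to `p ^ j`.
theorem eval_pderiv_mul_mem (h : IsTwistedRealization p o Ψ) {q : σ → R} {I : Ideal R} {j : ℕ}
    (hq : ∀ i, orbitPoint p j i - q i ∈ I) (i : σ) (s : A) {y : A} (hy : y ∈ h.vanishingIdeal q)
    (hyj : (Ψ y).totalDegree ≤ j) :
    eval (orbitPoint p j) (pderiv i (homogeneousComponent (j + 1) (Ψ (s * y)))) ∈ I := by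
  rw [h.apply_mul, homogeneousComponent_twistedMul, map_sum, map_sum]
  refine I.sum_mem fun x hx => ?_
  have hxj := Finset.HasAntidiagonal.mem_antidiagonal.mp hx
  rcases lt_or_ge j x.2 with hlt | hle
  · rw [homogeneousComponent_eq_zero _ _ (hyj.trans_lt hlt), mul_zero, map_zero, map_zero]
    exact I.zero_mem
  · have hsub : -(x.2 : ℤ) + j = (j - x.2 : ℕ) := by omega
    have hleft : eval (orbitPoint p j)
        (scaleVars (orbitPoint p (-x.2)) (homogeneousComponent x.1 (Ψ s))) = 0 := by
      rw [eval_scaleVars, ← orbitPoint_add, hsub]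
      exact h.eval_eq_zero s _ _ (by omega)
    have hright : eval (orbitPoint p j) (homogeneousComponent x.2 (Ψ y)) ∈ I := by
      have hmem := aeval_sub_aeval_mem hq (homogeneousComponent x.2 (Ψ y))
      rwa [aeval_eq_eval, aeval_eq_eval, hy x.2, sub_zero] at hmem
    rw [pderiv_mul, map_add, map_mul, map_mul, hleft, zero_mul, add_zero]
    exact I.mul_mem_left _ hright

lemma exists_eq_linForm_mul (h : IsTwistedRealization p o Ψ) {y : A} {j : ℕ}
    (hy : (Ψ y).IsHomogeneous j) (i : σ) :
    ∃ x, Ψ x = linForm o (orbitPoint p j) i * Ψ y := by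
  obtain ⟨x, -, hx⟩ := h.exists_scaleVars_eq_linForm i j
  exact ⟨x * y, by rw [h.apply_mul, twistedMul_of_isHomogeneous p _ hy, hx]⟩

lemma isHomogeneous_prod_linForm (p : σ → Rˣ) (o e : σ) (j : ℕ) :
    (∏ n ∈ Finset.range j, linForm o (orbitPoint p n) e).IsHomogeneous j := by
  simpa using IsHomogeneous.prod (Finset.range j) _ _ fun n _ =>
    isHomogeneous_linForm o (orbitPoint p n) e

lemma exists_eq_prod_linForm (h : IsTwistedRealization p o Ψ) (e : σ) (j : ℕ) :
    ∃ x, Ψ x = ∏ n ∈ Finset.range j, linForm o (orbitPoint p n) e := by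
  induction j with
  | zero => exact ⟨1, h.apply_one⟩
  | succ j ih =>
    obtain ⟨y, hy⟩ := ih
    obtain ⟨x, hx⟩ := h.exists_eq_linForm_mul (hy ▸ isHomogeneous_prod_linForm p o e j) e
    exact ⟨x, by rw [hx, hy, Finset.prod_range_succ_comm]⟩

lemma isUnit_eval_prod_linForm (h : IsTwistedRealization p o Ψ) {e : σ}
    (hpe : ∀ n ≠ 0, IsUnit ((p e : R) ^ n - 1)) (j : ℕ) :
    IsUnit (eval (orbitPoint p j) (∏ n ∈ Finset.range j, linForm o (orbitPoint p n) e)) := by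
  rw [map_prod]
  refine IsUnit.prod_iff.mpr fun n hn => ?_
  have hnj := Finset.mem_range.mp hn
  have hfac : (p e : R) ^ j - p e ^ n = p e ^ n * (p e ^ (j - n) - 1) := by
    rw [mul_sub, mul_one, ← pow_add, Nat.add_sub_of_le hnj.le]
  rw [eval_linForm (h.orbitPoint_eq_one j), orbitPoint_natCast, orbitPoint_natCast, hfac]
  exact ((p e).isUnit.pow n).mul (hpe _ (by omega))

lemma exists_mem_vanishingIdeal (h : IsTwistedRealization p o Ψ) {e e' : σ} (heo : e' ≠ o)
    (hee : e' ≠ e) {q : σ → R} (hqo : q o = 1) {j : ℕ}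
    (hq : q e - orbitPoint p j e ∣ q e' - orbitPoint p j e') :
    ∃ y ∈ h.vanishingIdeal q,
      eval (orbitPoint p j) (pderiv e' (homogeneousComponent (j + 1) (Ψ y))) =
        eval (orbitPoint p j) (∏ n ∈ Finset.range j, linForm o (orbitPoint p n) e) := by
  obtain ⟨θ, hθ⟩ := hq
  obtain ⟨z, hz⟩ := h.exists_eq_prod_linForm e j
  have hzj : (Ψ z).IsHomogeneous j := hz ▸ isHomogeneous_prod_linForm p o e j
  obtain ⟨x, hx⟩ := h.exists_eq_linForm_mul hzj e
  obtain ⟨x', hx'⟩ := h.exists_eq_linForm_mul hzj e'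
  let L := linForm o (orbitPoint p j) e' - θ • linForm o (orbitPoint p j) e
  have hy : Ψ (x' - θ • x) = L * Ψ z := by
    rw [map_sub, map_smul, hx, hx', sub_mul, smul_mul_assoc]
  have hyj : (Ψ (x' - θ • x)).IsHomogeneous (j + 1) := by
    rw [hy, add_comm]
    simp only [L, smul_eq_C_mul]
    exact ((isHomogeneous_linForm o _ e').sub
      ((isHomogeneous_linForm o _ e).C_mul θ)).mul hzj
  have hL : ∀ c : σ → R, c o = 1 → eval c L =
      c e' - orbitPoint p j e' - θ * (c e - orbitPoint p j e) := fun c hc => by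
    rw [map_sub, smul_eval, eval_linForm hc, eval_linForm hc]
  have hLj : eval (orbitPoint p j) L = 0 := by
    rw [hL _ (h.orbitPoint_eq_one j), sub_self, sub_self, mul_zero, sub_self]
  have hdL : pderiv e' L = 1 := by
    simp [L, linForm, pderiv_X_of_ne hee.symm, pderiv_X_of_ne heo.symm]
  refine ⟨x' - θ • x, fun m => ?_, ?_⟩
  · rw [homogeneousComponent_of_mem hyj]
    split_ifs
    · rw [hy, map_mul, hL q hqo, hθ, mul_comm θ, sub_self, zero_mul]
    · exact map_zero _
  · rw [homogeneousComponent_eq_self hyj, hy, hz, pderiv_mul, hdL, one_mul, map_add, map_mul, hLj,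
      zero_mul, add_zero]

theorem not_isNoetherianRing (h : IsTwistedRealization p o Ψ) {e e' : σ} (heo : e' ≠ o)
    (hee : e' ≠ e) (hpe : ∀ n ≠ 0, IsUnit ((p e : R) ^ n - 1)) {q : σ → R} (hqo : q o = 1)
    (hqe : ∀ j : ℕ, ¬IsUnit (q e - orbitPoint p j e))
    (hq : ∀ (j : ℕ) (i : σ), q e - orbitPoint p j e ∣ q i - orbitPoint p j i) :
    ¬IsNoetherianRing A := by
  intro hA
  obtain ⟨S, hS⟩ := IsNoetherian.noetherian (h.vanishingIdeal q)
  let j := S.sup fun y => (Ψ y).totalDegree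
  let I : Ideal R := Ideal.span {q e - orbitPoint p j e}
  have hqI : ∀ i, orbitPoint p j i - q i ∈ I := fun i =>
    Ideal.mem_span_singleton.mpr ((dvd_sub_comm).mp (hq j i))
  obtain ⟨y, hy, hyj⟩ := h.exists_mem_vanishingIdeal heo hee hqo (hq j e')
  suffices hyI : eval (orbitPoint p j) (pderiv e' (homogeneousComponent (j + 1) (Ψ y))) ∈ I from
    hqe j (Ideal.span_singleton_eq_top.mp
      (I.eq_top_of_isUnit_mem hyI (hyj ▸ h.isUnit_eval_prod_linForm hpe j)))
  obtain ⟨f, -, rfl⟩ := Submodule.mem_span_finset.mp (hS.symm ▸ hy)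
  simp only [map_sum]
  exact I.sum_mem fun s hs => h.eval_pderiv_mul_mem hqI e' (f s)
    (hS ▸ Submodule.subset_span hs) (Finset.le_sup (f := fun y => (Ψ y).totalDegree) hs)

end VanishingIdeal

end IsTwistedRealization

open TensorProduct in
theorem IsTwistedRealization.not_isNoetherianRing_tensorProduct {R A B σ : Type*} [CommRing R]
    [Ring A] [Algebra R A] [CommRing B] [Algebra R B] {p : σ → Rˣ} {o : σ}
    {Ψ : A →ₗ[R] MvPolynomial σ R} (h : IsTwistedRealization p o Ψ) {e e' : σ} (heo : e' ≠ o)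
    (hee : e' ≠ e) (hpe : ∀ n ≠ 0, IsUnit ((p e : R) ^ n - 1)) {q : σ → B} (hqo : q o = 1)
    (hqe : ∀ j : ℕ, ¬IsUnit (q e - algebraMap R B (orbitPoint p j e)))
    (hq : ∀ (j : ℕ) (i : σ), q e - algebraMap R B (orbitPoint p j e) ∣
      q i - algebraMap R B (orbitPoint p j i)) :
    ¬IsNoetherianRing (A ⊗[R] B) := by
  have hpoint (j : ℕ) (i : σ) : algebraMap R B (orbitPoint p j i)
      = orbitPoint (fun i => Units.map (algebraMap R B).toMonoidHom (p i)) j i := by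
    simp [orbitPoint]
  simp only [hpoint] at hqe hq
  refine fun hAB => (h.baseChange B).not_isNoetherianRing heo hee (fun n hn => ?_) hqo hqe hq
    (isNoetherianRing_of_ringEquiv _ (Algebra.TensorProduct.comm R A B).toRingEquiv)
  simpa using (hpe n hn).map (algebraMap R B)

section GenericOrbits

lemma subsingleton_setOf_add_nsmul_eq {σ : Type*} {e f : σ →₀ ℕ} (hef : e ≠ f) (a b : σ →₀ ℕ) :
    {n : ℕ | a + n • e = b + n • f}.Subsingleton := by
  intro n hn n' hn'
  obtain ⟨s, hs⟩ := DFunLike.ne_iff.mp hef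
  have h : a s + n * e s = b s + n * f s := DFunLike.congr_fun hn s
  have h' : a s + n' * e s = b s + n' * f s := DFunLike.congr_fun hn' s
  have hs' : (e s : ℤ) - f s ≠ 0 := sub_ne_zero.mpr (mod_cast hs)
  zify at h h' ⊢
  have hmul : ((n : ℤ) - n') * (e s - f s) = 0 := by linear_combination h - h'
  exact sub_eq_zero.mp ((mul_eq_zero.mp hmul).resolve_right hs')

-- A term of `c i₀ * monomial (n • e i₀) 1` cancels against another summand for few `n` only.
lemma finite_setOf_sum_mul_monomial_eq_zero {R ι σ : Type*} [CommSemiring R] {S : Finset ι}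
    {e : ι → σ →₀ ℕ} (he : Set.InjOn e S) {c : ι → MvPolynomial σ R} (hc : ∃ i ∈ S, c i ≠ 0) :
    {n : ℕ | ∑ i ∈ S, c i * monomial (n • e i) 1 = 0}.Finite := by
  classical
  obtain ⟨i₀, hi₀, hci₀⟩ := hc
  obtain ⟨a₀, ha₀⟩ := support_nonempty.mpr hci₀
  have hfin : (⋃ x ∈ (S.erase i₀).sigma fun i => (c i).support,
      {n : ℕ | x.2 + n • e x.1 = a₀ + n • e i₀}).Finite := by
    refine Set.Finite.biUnion (Finset.finite_toSet _) fun x hx => Set.Subsingleton.finite ?_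
    obtain ⟨hx₁, hx₂⟩ := Finset.mem_erase.mp (Finset.mem_sigma.mp hx).1
    exact subsingleton_setOf_add_nsmul_eq (fun h => hx₁ (he hx₂ hi₀ h)) _ _
  refine hfin.subset fun n hn => ?_
  by_contra hnot
  refine mem_support_iff.mp ha₀ ?_
  have h0 : coeff (a₀ + n • e i₀) (∑ i ∈ S, c i * monomial (n • e i) 1) = 0 := by
    rw [hn, coeff_zero]
  rw [coeff_sum, Finset.sum_eq_single_of_mem i₀ hi₀ fun i hi hne => ?_, coeff_mul_monomial,
    mul_one] at h0
  · exact h0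
  rw [coeff_mul_monomial', mul_one]
  split_ifs with hle
  · by_contra hcoeff
    exact hnot (Set.mem_iUnion₂.mpr ⟨⟨i, a₀ + n • e i₀ - n • e i⟩,
      Finset.mem_sigma.mpr ⟨Finset.mem_erase.mpr ⟨hne, hi⟩, mem_support_iff.mpr hcoeff⟩,
      tsub_add_cancel_of_le hle⟩)
  · rfl

lemma exists_forall_sum_mul_eq_zero {A k ι : Type*} [CommRing A] [Field k] [Algebra A k]
    [FaithfulSMul A k] {S : Finset ι} {c : ι → k} (hc : ∃ i ∈ S, c i ≠ 0) :
    ∃ b : ι → A, (∃ i ∈ S, b i ≠ 0) ∧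
      ∀ a : ι → A, ∑ i ∈ S, a i • c i = 0 → ∑ i ∈ S, b i * a i = 0 := by
  have : IsDomain A := (FaithfulSMul.algebraMap_injective A k).isDomain
  let _ : Algebra (FractionRing A) k := FractionRing.liftAlgebra A k
  have : IsScalarTower A (FractionRing A) k := FractionRing.isScalarTower_liftAlgebra A k
  obtain ⟨i₀, hi₀, hci₀⟩ := hc
  obtain ⟨φ, hφ⟩ : ∃ φ : Module.Dual (FractionRing A) k, φ (c i₀) ≠ 0 := by
    by_contra! h
    exact hci₀ ((Module.forall_dual_apply_eq_zero_iff (FractionRing A) (c i₀)).mp h)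
  obtain ⟨s, hs⟩ := IsLocalization.exist_integer_multiples (nonZeroDivisors A) S fun i => φ (c i)
  choose! b hb using hs
  refine ⟨b, ⟨i₀, hi₀, ?_⟩, fun a ha => ?_⟩
  · refine (map_ne_zero_iff _ (IsFractionRing.injective A (FractionRing A))).mp ?_
    rw [hb i₀ hi₀]
    exact smul_ne_zero (nonZeroDivisors.coe_ne_zero s) hφ
  · apply IsFractionRing.injective A (FractionRing A)
    calc algebraMap A (FractionRing A) (∑ i ∈ S, b i * a i)
      _ = (s : A) • φ (∑ i ∈ S, a i • c i) := by
        rw [map_sum, map_sum, Finset.smul_sum]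
        refine Finset.sum_congr rfl fun i hi => ?_
        rw [map_mul, hb i hi, ← algebraMap_smul (FractionRing A) (a i) (c i), map_smul, smul_comm,
          smul_eq_mul, mul_comm]
      _ = algebraMap A (FractionRing A) 0 := by rw [ha, map_zero, smul_zero, map_zero]

variable {F k τ : Type*} [CommRing F] [Field k] [Algebra F k]

theorem finite_setOf_sum_mul_prod_pow_eq_zero {p : τ → k} (hp : AlgebraicIndependent F p)
    {ι : Type*} {S : Finset ι} {e : ι → τ →₀ ℕ} (he : Set.InjOn e S) {c : ι → k}
    (hc : ∃ i ∈ S, c i ≠ 0) :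
    {n : ℕ | ∑ i ∈ S, c i * (e i).prod (fun j a => (p j ^ n) ^ a) = 0}.Finite := by
  let _ : Algebra (MvPolynomial τ F) k := (aeval p : MvPolynomial τ F →ₐ[F] k).toAlgebra
  have : FaithfulSMul (MvPolynomial τ F) k := (faithfulSMul_iff_algebraMap_injective _ k).mpr hp
  obtain ⟨b, hb0, hb⟩ := exists_forall_sum_mul_eq_zero (A := MvPolynomial τ F) hc
  refine (finite_setOf_sum_mul_monomial_eq_zero he hb0).subset fun n hn => hb _ ?_
  refine (Finset.sum_congr rfl fun i _ => ?_).trans hn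
  rw [Algebra.smul_def, mul_comm]
  congr 1
  change aeval p (monomial (n • e i) (1 : F)) = _
  rw [aeval_monomial, map_one, one_mul, Finsupp.prod_of_support_subset _ Finsupp.support_smul _
    (by simp)]
  simp [Finsupp.prod, pow_mul]

theorem finite_setOf_eval_pow_eq_zero {p : τ → k} (hp : AlgebraicIndependent F p)
    {f : MvPolynomial τ k} (hf : f ≠ 0) : {n : ℕ | eval (fun i => p i ^ n) f = 0}.Finite := by
  obtain ⟨a, ha⟩ := support_nonempty.mpr hf
  simp only [eval_eq]
  exact finite_setOf_sum_mul_prod_pow_eq_zero hp (Set.injOn_id _) ⟨a, ha, mem_support_iff.mp ha⟩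

lemma injOn_some_support {R : Type*} [CommSemiring R] {m : ℕ} {F : MvPolynomial (Option τ) R}
    (hF : F.IsHomogeneous m) : Set.InjOn Finsupp.some (F.support : Set (Option τ →₀ ℕ)) := by
  have hdeg : ∀ a ∈ F.support, a none + a.some.degree = m := fun a ha => by
    rw [hF.degree_eq_sum_deg_support ha]
    exact (Finsupp.sum_option_index a (fun _ n => n) (fun _ => rfl) fun _ _ _ => rfl).symm
  intro a ha b hb hab
  ext i
  cases i with
  | none => exact Nat.add_right_cancel ((hdeg a ha).trans (hab ▸ (hdeg b hb)).symm)
  | some i => exact DFunLike.congr_fun hab i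

theorem isCriticallyDense_orbitPoint_consOne {p : τ → kˣ}
    (hp : AlgebraicIndependent F fun i => (p i : k)) :
    IsCriticallyDense fun j : ℕ => orbitPoint (consOne p) j := by
  intro m f hf hf0
  obtain ⟨a, ha⟩ := support_nonempty.mpr hf0
  refine (finite_setOf_sum_mul_prod_pow_eq_zero hp (injOn_some_support hf)
    ⟨a, ha, mem_support_iff.mp ha⟩).subset fun n hn => ?_
  refine Eq.trans (Finset.sum_congr rfl fun b _ => ?_) ((eval_eq _ _).symm.trans hn)
  have h := Finsupp.prod_option_index b (fun i a => orbitPoint (consOne p) n i ^ a)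
    (fun _ => pow_zero _) fun _ => pow_add _
  simp only [orbitPoint, consOne, Option.elim_none, Option.elim_some, Units.val_one,
    one_pow, one_mul, zpow_natCast, Units.val_pow_eq_pow_val] at h
  exact congrArg (coeff b f * ·) h.symm

theorem algebraicIndependent_inv [Finite τ] {p : τ → k} (hp : AlgebraicIndependent F p) :
    AlgebraicIndependent F p⁻¹ := by
  classical
  cases nonempty_fintype τ
  have : IsDomain F := hp.algebraMap_injective.isDomain
  refine algebraicIndependent_iff.mpr fun f hf => ?_
  let e (a : τ →₀ ℕ) : τ →₀ ℕ := Finsupp.equivFunOnFinite.symm fun i => f.totalDegree - a i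
  have hle : ∀ a ∈ f.support, ∀ i, a i ≤ f.totalDegree := fun a ha i =>
    (Finsupp.le_degree i a).trans (le_totalDegree ha)
  have he : Set.InjOn e f.support := fun a ha b hb hab => Finsupp.ext fun i => by
    have h : f.totalDegree - a i = f.totalDegree - b i := DFunLike.congr_fun hab i
    have := hle a ha i
    have := hle b hb i
    omega
  have hg : ∑ a ∈ f.support, monomial (e a) (coeff a f) = 0 := by
    refine algebraicIndependent_iff.mp hp _ ?_
    calc aeval p (∑ a ∈ f.support, monomial (e a) (coeff a f))
      _ = (∏ i, p i ^ f.totalDegree) * aeval p⁻¹ f := by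
        rw [map_sum, aeval_def p⁻¹, eval₂_eq', Finset.mul_sum]
        refine Finset.sum_congr rfl fun a ha => ?_
        rw [aeval_monomial, mul_left_comm, ← Finset.prod_mul_distrib,
          Finsupp.prod_fintype _ _ fun _ => pow_zero _]
        congr 1
        refine Finset.prod_congr rfl fun i _ => ?_
        rw [Pi.inv_apply, inv_pow]
        exact pow_sub₀ _ (hp.ne_zero i) (hle a ha i)
      _ = 0 := by rw [hf, mul_zero]
  ext a
  by_contra ha
  refine ha ?_
  calc coeff a f
    _ = coeff (e a) (∑ a ∈ f.support, monomial (e a) (coeff a f)) := by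
      rw [coeff_sum, Finset.sum_eq_single_of_mem a (mem_support_iff.mpr ha), coeff_monomial,
        if_pos rfl]
      intro b hb hba
      rw [coeff_monomial, if_neg fun h => hba (he hb (mem_support_iff.mpr ha) h)]
    _ = 0 := by rw [hg, coeff_zero]

end GenericOrbits

section ValuationIntersection

open scoped WithZero

variable {R K Γ₀ ι : Type*} [CommRing R] [Field K] [Algebra R K]
  [LinearOrderedCommGroupWithZero Γ₀]

/-- The ring of elements which are integral for every member of a family of valuations, as an
algebra over a ring of such elements. -/
def valuationIntersection (v : ι → Valuation K Γ₀)
    (hv : ∀ i (r : R), v i (algebraMap R K r) ≤ 1) : Subalgebra R K where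
  carrier := {x | ∀ i, v i x ≤ 1}
  mul_mem' hx hy i := by
    rw [map_mul]
    exact mul_le_one' (hx i) (hy i)
  add_mem' hx hy i := (v i).map_add_le (hx i) (hy i)
  algebraMap_mem' r i := hv i r

namespace valuationIntersection

variable {v : ι → Valuation K Γ₀} {hv : ∀ i (r : R), v i (algebraMap R K r) ≤ 1}

lemma dvd_of_le {x y : valuationIntersection v hv} (hx : x ≠ 0) (h : ∀ i, v i y ≤ v i x) :
    x ∣ y := by
  have hx0 : (x : K) ≠ 0 := fun h0 => hx (Subtype.ext h0)
  have hxy : ∀ i, v i ((x : K)⁻¹ * y) ≤ 1 := fun i => by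
    rw [map_mul, map_inv₀]
    exact inv_mul_le_one_of_le₀ (h i) zero_le
  exact ⟨⟨_, hxy⟩, Subtype.ext (mul_inv_cancel_left₀ hx0 (y : K)).symm⟩

lemma le_of_dvd {x y : valuationIntersection v hv} (h : x ∣ y) (i : ι) : v i y ≤ v i x := by
  obtain ⟨z, rfl⟩ := h
  rw [MulMemClass.coe_mul, map_mul]
  exact mul_le_of_le_one_right' (z.2 i)

lemma not_isUnit_of_lt_one {x : valuationIntersection v hv} {i : ι} (hx : v i x < 1) :
    ¬IsUnit x := fun h =>
  hx.not_ge (((v i).map_one).symm.trans_le (le_of_dvd (y := 1) h.dvd i))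

lemma exists_mem_of_isPrime [MulArchimedean Γ₀] {ϖ : ι → valuationIntersection v hv}
    (hϖ : ∀ i, v i (ϖ i) < 1) {P : Ideal (valuationIntersection v hv)} [hP : P.IsPrime]
    {x : valuationIntersection v hv} (hx : x ∈ P) (hx0 : x ≠ 0)
    (hfin : {i | v i x ≠ 1}.Finite) : ∃ i, ϖ i ∈ P ∧ v i x < 1 := by
  have hvx : ∀ i, v i x ≠ 0 := fun i => (v i).ne_zero_iff.mpr fun h0 => hx0 (Subtype.ext h0)
  choose n hn using fun i => exists_pow_lt₀ (hϖ i) (Units.mk0 _ (hvx i))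
  have hdvd : x ∣ ∏ i ∈ hfin.toFinset, ϖ i ^ n i := dvd_of_le hx0 fun i => by
    by_cases hi : v i x = 1
    · rw [hi]
      exact (∏ i ∈ hfin.toFinset, ϖ i ^ n i).2 i
    · refine (le_of_dvd (Finset.dvd_prod_of_mem _ (hfin.mem_toFinset.mpr hi)) i).trans ?_
      rw [SubmonoidClass.coe_pow, map_pow]
      exact (hn i).le
  obtain ⟨i, hi, hiP⟩ := hP.prod_mem_iff.mp (P.mem_of_dvd hdvd hx)
  exact ⟨i, hP.mem_of_pow_mem _ hiP, lt_of_le_of_ne (x.2 i) (hfin.mem_toFinset.mp hi)⟩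

variable {v : ι → Valuation K ℤᵐ⁰} {hv : ∀ i (r : R), v i (algebraMap R K r) ≤ 1}

-- Every prime containing some `x ≠ 0` contains some `ϖ i`, and only one as `ϖ i - ϖ j` is a unit.
theorem isPrincipalIdealRing {ϖ : ι → valuationIntersection v hv}
    (hϖ : ∀ i, v i (ϖ i) = WithZero.exp (-1)) (hϖ' : ∀ i j, i ≠ j → v i (ϖ j) = 1)
    (hunit : ∀ i j, i ≠ j → IsUnit (ϖ i - ϖ j))
    (hfin : ∀ x : K, x ≠ 0 → {i | v i x ≠ 1}.Finite) :
    IsPrincipalIdealRing (valuationIntersection v hv) := by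
  have hlt : ∀ i, v i (ϖ i) < 1 := fun i => by
    rw [hϖ, ← WithZero.exp_zero, WithZero.exp_lt_exp]
    exact neg_one_lt_zero
  refine IsPrincipalIdealRing.of_prime_ne_bot fun P hP hbot => ?_
  obtain ⟨x, hx, hx0⟩ := Submodule.exists_mem_ne_zero_of_ne_bot hbot
  obtain ⟨i, hi, -⟩ := exists_mem_of_isPrime hlt hx hx0 (hfin x (by simpa using hx0))
  refine ⟨ϖ i, le_antisymm (fun g hg => ?_) (by simpa using hi)⟩
  rcases eq_or_ne g 0 with rfl | hg0
  · exact Submodule.zero_mem _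
  obtain ⟨j, hj, hjg⟩ := exists_mem_of_isPrime hlt hg hg0 (hfin g (by simpa using hg0))
  obtain rfl : i = j := by
    by_contra hij
    exact hP.ne_top (P.eq_top_of_isUnit_mem (P.sub_mem hi hj) (hunit i j hij))
  have hϖ0 : ϖ i ≠ 0 := fun h0 => WithZero.exp_ne_zero ((hϖ i).symm.trans (by simp [h0]))
  refine Ideal.mem_span_singleton.mpr (dvd_of_le hϖ0 fun l => ?_)
  rcases eq_or_ne l i with rfl | hl
  · rw [hϖ, ← WithZero.lt_mul_exp_iff_le WithZero.exp_ne_zero, ← WithZero.exp_add]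
    simpa using hjg
  · rw [hϖ' l i hl]
    exact g.2 l

end valuationIntersection

end ValuationIntersection

section LineValuation

variable {k σ : Type*} [Field k]

/-- The restriction of a polynomial to the line through `c` and the generic point `X`, with the
parameter equal to `0` at `c` and to `1` at the generic point. -/
def genericLine (c : σ → k) :
    MvPolynomial σ k →ₐ[k] Polynomial (FractionRing (MvPolynomial σ k)) :=
  aeval fun i => Polynomial.C (algebraMap k _ (c i)) +
    Polynomial.C (algebraMap (MvPolynomial σ k) _ (X i - C (c i))) * Polynomial.X

lemma genericLine_X (c : σ → k) (i : σ) :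
    genericLine c (X i) = Polynomial.C (algebraMap k _ (c i)) +
      Polynomial.C (algebraMap (MvPolynomial σ k) _ (X i - C (c i))) * Polynomial.X :=
  aeval_X _ i

lemma eval_zero_genericLine (c : σ → k) (f : MvPolynomial σ k) :
    (genericLine c f).eval 0 = algebraMap k _ (eval c f) := by
  induction f using MvPolynomial.induction_on with
  | C r => simp
  | add f g hf hg => simp [hf, hg]
  | mul_X f i hf => simp [hf, genericLine_X]

lemma eval_one_genericLine (c : σ → k) (f : MvPolynomial σ k) :
    (genericLine c f).eval 1 = algebraMap _ _ f := by
  have hC (r : k) : algebraMap (MvPolynomial σ k) (FractionRing (MvPolynomial σ k)) (C r)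
      = algebraMap k _ r := (IsScalarTower.algebraMap_apply k (MvPolynomial σ k) _ r).symm
  induction f using MvPolynomial.induction_on with
  | C r => simp [hC]
  | add f g hf hg => simp [hf, hg]
  | mul_X f i hf => simp [hf, hC, genericLine_X]

lemma genericLine_injective (c : σ → k) : Function.Injective (genericLine c) := fun f g hfg =>
  IsFractionRing.injective _ (FractionRing (MvPolynomial σ k)) (by
    rw [← eval_one_genericLine c, hfg, eval_one_genericLine])

open scoped WithZero

/-- The order of vanishing at `c` along the generic line through `c`. -/
def lineValuation (c : σ → k) : Valuation (FractionRing (MvPolynomial σ k)) ℤᵐ⁰ :=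
  ((Polynomial.idealX (FractionRing (MvPolynomial σ k))).valuation
    (RatFunc (FractionRing (MvPolynomial σ k)))).comap
    (IsFractionRing.lift (A := MvPolynomial σ k)
      (g := (algebraMap (Polynomial (FractionRing (MvPolynomial σ k))) (RatFunc _)).comp
        (genericLine c).toRingHom)
      ((IsFractionRing.injective _ _).comp (genericLine_injective c)))

lemma lineValuation_algebraMap (c : σ → k) (f : MvPolynomial σ k) :
    lineValuation c (algebraMap _ _ f)
      = (Polynomial.idealX (FractionRing (MvPolynomial σ k))).valuation
        (RatFunc (FractionRing (MvPolynomial σ k)))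
        (algebraMap (Polynomial (FractionRing (MvPolynomial σ k))) _ (genericLine c f)) := by
  rw [lineValuation, Valuation.comap_apply, IsFractionRing.lift_algebraMap]
  rfl

lemma valuation_idealX_eq_one {L : Type*} [Field L] {f : Polynomial L} (hf : f.eval 0 ≠ 0) :
    (Polynomial.idealX L).valuation (RatFunc L) (algebraMap _ _ f) = 1 := by
  rwa [IsDedekindDomain.HeightOneSpectrum.valuation_eq_one_iff_notMem, Polynomial.idealX_span,
    Ideal.mem_span_singleton, Polynomial.X_dvd_iff, Polynomial.coeff_zero_eq_eval_zero]

lemma lineValuation_le_one (c : σ → k) (f : MvPolynomial σ k) :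
    lineValuation c (algebraMap _ _ f) ≤ 1 := by
  rw [lineValuation_algebraMap]
  exact IsDedekindDomain.HeightOneSpectrum.valuation_le_one _ _

lemma lineValuation_eq_one {c : σ → k} {f : MvPolynomial σ k} (hf : eval c f ≠ 0) :
    lineValuation c (algebraMap _ _ f) = 1 := by
  rw [lineValuation_algebraMap]
  refine valuation_idealX_eq_one ?_
  rw [eval_zero_genericLine]
  exact (map_ne_zero _).mpr hf

lemma lineValuation_X_sub_C (c : σ → k) (i : σ) :
    lineValuation c (algebraMap _ _ (X i - C (c i))) = WithZero.exp (-1) := by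
  have hX : X i - C (c i) ≠ 0 := fun h => by simpa using congrArg (eval fun j => c j + 1) h
  have hline : genericLine c (X i - C (c i))
      = Polynomial.C (algebraMap (MvPolynomial σ k) _ (X i - C (c i))) * Polynomial.X := by
    rw [map_sub, genericLine_X, ← algebraMap_eq, AlgHom.commutes]
    exact add_sub_cancel_left _ _
  rw [lineValuation_algebraMap, hline, map_mul, map_mul, valuation_idealX_eq_one, one_mul,
    RatFunc.algebraMap_X, Polynomial.valuation_X_eq_neg_one]
  rw [Polynomial.eval_C]
  exact (map_ne_zero_iff _ (IsFractionRing.injective _ _)).mpr hX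

lemma finite_setOf_lineValuation_ne_one {ι : Type*} {c : ι → σ → k}
    (hc : ∀ f : MvPolynomial σ k, f ≠ 0 → {j | eval (c j) f = 0}.Finite)
    {x : FractionRing (MvPolynomial σ k)} (hx : x ≠ 0) :
    {j | lineValuation (c j) x ≠ 1}.Finite := by
  obtain ⟨f, g, hg, rfl⟩ := IsFractionRing.div_surjective (A := MvPolynomial σ k) x
  have hf : f ≠ 0 := by
    rintro rfl
    simp at hx
  refine ((hc f hf).union (hc g (nonZeroDivisors.ne_zero hg))).subset fun j hj => ?_
  by_contra hnot
  obtain ⟨h1, h2⟩ := not_or.mp hnot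
  exact hj (by rw [map_div₀, lineValuation_eq_one h1, lineValuation_eq_one h2, div_one])

theorem exists_isNoetherianRing_forall_dvd {k : Type u} {σ : Type v} [Field k] {e : σ}
    {ι : Type*} {c : ι → σ → k} (he : Function.Injective fun j => c j e)
    (hc : ∀ f : MvPolynomial σ k, f ≠ 0 → {j | eval (c j) f = 0}.Finite) :
    ∃ (B : Type (max u v)) (_ : CommRing B) (_ : Algebra k B), IsNoetherianRing B ∧
      ∃ q : σ → B, (∀ j, ¬IsUnit (q e - algebraMap k B (c j e))) ∧
        ∀ j i, q e - algebraMap k B (c j e) ∣ q i - algebraMap k B (c j i) := by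
  have hk (j : ι) (r : k) :
      lineValuation (c j) (algebraMap k (FractionRing (MvPolynomial σ k)) r) ≤ 1 := by
    rw [IsScalarTower.algebraMap_apply k (MvPolynomial σ k)]
    exact lineValuation_le_one _ _
  let B := valuationIntersection (fun j => lineValuation (c j)) hk
  let q (i : σ) : B := ⟨algebraMap (MvPolynomial σ k) _ (X i), fun j => lineValuation_le_one _ _⟩
  have hq (j : ι) (i : σ) : ((q i - algebraMap k B (c j i) : B) : FractionRing (MvPolynomial σ k))
      = algebraMap _ _ (X i - C (c j i)) := by
    rw [map_sub, ← algebraMap_eq, ← IsScalarTower.algebraMap_apply]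
    rfl
  have hqe (l j : ι) (h : l ≠ j) : lineValuation (c l) ↑(q e - algebraMap k B (c j e)) = 1 := by
    rw [hq]
    exact lineValuation_eq_one (by simpa [sub_eq_zero] using fun h' => h (he h'))
  have hqj (j : ι) (i : σ) :
      lineValuation (c j) ↑(q i - algebraMap k B (c j i)) = WithZero.exp (-1) := by
    rw [hq, lineValuation_X_sub_C]
  have hPIR : IsPrincipalIdealRing B :=
    valuationIntersection.isPrincipalIdealRing (fun j => hqj j e) hqe (fun i j hij => by
      rw [sub_sub_sub_cancel_left, ← map_sub]
      exact (IsUnit.mk0 _ (sub_ne_zero.mpr fun h => hij (he h).symm)).map _)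
      fun x hx => finite_setOf_lineValuation_ne_one hc hx
  refine ⟨B, inferInstance, inferInstance, inferInstance, q, fun j => ?_, fun j i => ?_⟩
  · refine valuationIntersection.not_isUnit_of_lt_one (i := j) ?_
    rw [hqj, ← WithZero.exp_zero, WithZero.exp_lt_exp]
    exact neg_one_lt_zero
  · refine valuationIntersection.dvd_of_le (fun h0 => ?_) fun l => ?_
    · exact WithZero.exp_ne_zero ((hqj j e).symm.trans (by rw [h0]; exact map_zero _))
    · rcases eq_or_ne l j with rfl | hl
      · exact ((hqj l i).trans (hqj l e).symm).le
      · exact (q i - algebraMap k B (c j i)).2 l |>.trans_eq (hqe l j hl).symm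

end LineValuation

lemma consOne_inv {G τ : Type*} [DivisionMonoid G] (p : τ → G) : (consOne p)⁻¹ = consOne p⁻¹ :=
  funext fun i => by cases i <;> simp [consOne]

theorem isCriticallyDense_orbitPoint_inv_consOne {F k τ : Type*} [CommRing F] [Field k]
    [Algebra F k] [Finite τ] {p : τ → kˣ} (hp : AlgebraicIndependent F fun i => (p i : k)) :
    IsCriticallyDense fun j : ℕ => orbitPoint (consOne p)⁻¹ j := by
  rw [consOne_inv]
  refine isCriticallyDense_orbitPoint_consOne (F := F) ?_
  simpa only [Pi.inv_def, Units.val_inv_eq_inv_val] using algebraicIndependent_inv hp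

theorem stmt_2_general {k : Type u} {τ : Type v} {F : Type*} [Field k] [CommRing F] [Algebra F k]
    [Finite τ] [Nontrivial τ] {p : τ → k} (hp : AlgebraicIndependent F p)
    {D : τ → Module.End k (LaurentPolynomial k)}
    (hD : ∀ i, ∀ n : ℤ, D i (LaurentPolynomial.T n)
        = ((p i ^ n - 1) / (p i - 1)) • LaurentPolynomial.T (n - 1)) :
    IsNoetherianRing (Algebra.adjoin k (Set.range D)) ∧
    IsNoetherianRing (↥(Algebra.adjoin k (Set.range D)))ᵐᵒᵖ ∧
    ∃ (B : Type (max u v)) (_ : CommRing B) (_ : Algebra k B), IsNoetherianRing B ∧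
      ¬ IsNoetherianRing (TensorProduct k (Algebra.adjoin k (Set.range D)) B) := by
  have : IsDomain F := hp.algebraMap_injective.isDomain
  lift p to τ → kˣ using fun i => (hp.ne_zero i).isUnit
  have hpow (i : τ) {n : ℕ} (hn : n ≠ 0) : (p i : k) ^ n ≠ 1 := fun h =>
    (hp.transcendental i).pow (Nat.pos_of_ne_zero hn) (h ▸ isAlgebraic_one)
  have hfo (i : τ) : ¬IsOfFinOrder (p i) := fun h => by
    obtain ⟨n, hn, h1⟩ := isOfFinOrder_iff_pow_eq_one.mp h
    exact hpow i hn.ne' (by rw [← Units.val_pow_eq_pow_val, h1, Units.val_one])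
  have hd := isCriticallyDense_orbitPoint_consOne hp
  obtain ⟨e, e', hee⟩ := exists_pair_ne τ
  obtain ⟨Ψ, h, hΨ⟩ := exists_isTwistedRealization_adjoin
    (fun i hi => hpow i one_ne_zero (by simp [hi])) hd hD
  obtain ⟨B, _, _, hB, q, hqe, hq⟩ := exists_isNoetherianRing_forall_dvd (e := e)
    (c := fun (j : ℕ) i => (p i : k) ^ j)
    (Units.val_injective.comp (injective_pow_iff_not_isOfFinOrder.mpr (hfo e)))
    (fun f => finite_setOf_eval_pow_eq_zero hp)
  refine ⟨h.isNoetherianRing hΨ (e := some e) (hfo e) hd,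
    h.op.isNoetherianRing (IsTwistedRealization.op_injective hΨ) (e := some e)
      (isOfFinOrder_inv_iff.not.mpr (hfo e)) (isCriticallyDense_orbitPoint_inv_consOne hp),
    B, inferInstance, inferInstance, hB,
    h.not_isNoetherianRing_tensorProduct (e := some e) (e' := some e') (Option.some_ne_none _)
      (by simpa using hee.symm) (fun n hn => (sub_ne_zero.mpr (hpow e hn)).isUnit)
      (q := consOne q) rfl (by simpa [orbitPoint, consOne] using hqe) fun j i => ?_⟩
  cases i with
  | none => simp [orbitPoint, consOne]
  | some i => simpa [orbitPoint, consOne] using hq j i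

/-- the algebra generated by `t ≥ 2` generic Eulerian derivatives is
noetherian but not strongly noetherian. -/
theorem stmt_2 {k : Type u} [Field k] [IsAlgClosed k]
    (t : ℕ) (ht : 2 ≤ t) (p : Fin t → k)
    (hp : AlgebraicIndependent (⊥ : Subfield k) p)
    (D : Fin t → Module.End k (LaurentPolynomial k))
    (hD : ∀ i, ∀ n : ℤ, D i (LaurentPolynomial.T n)
        = ((p i ^ n - 1) / (p i - 1)) • LaurentPolynomial.T (n - 1)) :
    IsNoetherianRing (Algebra.adjoin k (Set.range D)) ∧
    IsNoetherianRing (↥(Algebra.adjoin k (Set.range D)))ᵐᵒᵖ ∧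
    ∃ (B : Type u) (_ : CommRing B) (_ : Algebra k B), IsNoetherianRing B ∧
      ¬ IsNoetherianRing (TensorProduct k (Algebra.adjoin k (Set.range D)) B) :=
  have : Nontrivial (Fin t) := Fin.nontrivial_iff_two_le.mpr ht
  stmt_2_general hp hD
end
end

section
/- Let t ≥ 2 and let p_1, …, p_t ∈ k be algebraically independent over the prime subfield of k. Let A be the k-subalgebra of End_k(k[Y,Y⁻¹]) generated by the Eulerian derivatives D_{p_1}, …, D_{p_t}. For i ∈ ℕ set c_i = (p_1^i, …, p_t^i) ∈ k^t (these points have pairwise distinct first coordinates p_1^i), and let B be the infinite blowup of 𝔸^t at the sequence (c_i): the k-subalgebra of the rational function field k(y_1,…,y_t) generated by y_1,…,y_t together with all elements (y_j − p_j^i)·(y_1 − p_1^i)^{−1} for 2 ≤ j ≤ t and i ∈ ℕ. Then the tensor product A ⊗_k B is not a left noetherian ring. -/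
set_option synthInstance.maxHeartbeats 1000000
set_option maxHeartbeats 4000000
set_option maxSynthPendingDepth 3

noncomputable section

/-!
Since the points `(p₁ⁿ, …, p_tⁿ)` are Zariski dense, replacing `p_iⁿ` by `p_iⁿ X_i` in the
coefficients deforms the action of `A` to Laurent polynomials over `k[X_1, …, X_t]`. The deformed
operators preserve the space of those that vanish at `X = 1`, and to second order in negative
degrees, because the coefficient between the degrees `0` and `-1` is a multiple of `X_i - 1`.

Let `b_l ∈ B` be the slope `(y_j - p_jˡ) / (y_i - p_iˡ)` and let
`κ_l = p_jˡ (p_j - 1) D_j D_iˡ ⊗ 1 - p_iˡ (p_i - 1) D_iˡ⁺¹ ⊗ b_l`. At a `k`-point of `B` over `c_m`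
every `b_l` with `l < m` is the slope of the line through `c_l` and `c_m`, so `κ_l` sends `Tᵐ` into
this space. But `κ_m` sends `Tᵐ` to degree `-1`, with a coefficient that vanishes only to first
order whatever the value of `b_m`. Hence `κ_m` is not in the left ideal generated by the `κ_l` with
`l < m`.
-/

namespace EulerianBlowup

open MvPolynomial
open scoped PowerSeries TensorProduct

section NoetherianCriterion

variable {k R M : Type*} [CommRing k] [Ring R] [Algebra k R] [AddCommGroup M] [Module k M]

/-- The left ideal of elements of `R` that move the vector `v` into the invariant subspace `W`,
for an action `ρ` of `R` on `M`. -/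
def transporter (ρ : R →ₐ[k] Module.End k M) (W : Submodule k M)
    (hW : ∀ a, W ∈ (ρ a).invtSubmodule) (v : M) : Ideal R where
  carrier := {a | ρ a v ∈ W}
  add_mem' ha hb := by simpa using! W.add_mem ha hb
  zero_mem' := by simp
  smul_mem' a b hb := by simpa using! hW a hb

lemma not_isNoetherian_of_mem_of_notMem {R M : Type*} [Ring R] [AddCommGroup M] [Module R M]
    (W : ℕ → Submodule R M) (x : ℕ → M) (hmem : ∀ m, ∀ l < m, x l ∈ W m)
    (hnotMem : ∀ m, x m ∉ W m) : ¬ IsNoetherian R M := by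
  intro hM
  let J : ℕ →o Submodule R M :=
    ⟨fun n => Submodule.span R (x '' Set.Iio n), fun _ _ h =>
      Submodule.span_mono (Set.image_mono (Set.Iio_subset_Iio h))⟩
  obtain ⟨m, hm⟩ := monotone_stabilizes_iff_noetherian.2 hM J
  have hxJ : x m ∈ J m := by
    rw [hm (m + 1) m.le_succ]
    exact Submodule.subset_span ⟨m, m.lt_succ_self, rfl⟩
  have hJW : J m ≤ W m := Submodule.span_le.2 (Set.image_subset_iff.2 (hmem m))
  exact hnotMem m (hJW hxJ)

lemma mem_invtSubmodule_of_adjoin {s : Set R} {ρ : Algebra.adjoin k s →ₐ[k] Module.End k M}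
    {W : Submodule k M}
    (hW : ∀ x (hx : x ∈ s), W ∈ (ρ ⟨x, Algebra.subset_adjoin hx⟩).invtSubmodule)
    (a : Algebra.adjoin k s) : W ∈ (ρ a).invtSubmodule := by
  obtain ⟨a, ha⟩ := a
  induction ha using Algebra.adjoin_induction with
  | mem x hx => exact hW x hx
  | algebraMap r =>
    intro v hv
    have hρ : ρ ⟨algebraMap k R r, _⟩ = algebraMap k _ r := ρ.commutes r
    simpa [hρ] using W.smul_mem r hv
  | add x y hx hy hWx hWy =>
    have hρ : ρ ⟨x + y, _⟩ = ρ ⟨x, hx⟩ + ρ ⟨y, hy⟩ := map_add ρ ⟨x, hx⟩ ⟨y, hy⟩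
    exact hρ ▸ Module.End.invtSubmodule_inf_invtSubmodule_le_invtSubmodule_add _ _ ⟨hWx, hWy⟩
  | mul x y hx hy hWx hWy =>
    have hρ : ρ ⟨x * y, _⟩ = ρ ⟨x, hx⟩ * ρ ⟨y, hy⟩ := map_mul ρ ⟨x, hx⟩ ⟨y, hy⟩
    exact hρ ▸ Module.End.invtSubmodule.comp _ hWx hWy

end NoetherianCriterion

section Graph

variable {k E F : Type*} [CommRing k] [Ring E] [Algebra k E] [Ring F] [Algebra k F]

lemma exists_algHom_adjoin_of_graph (Γ : Subalgebra k (E × F)) (hΓ : ∀ y, (0, y) ∈ Γ → y = 0)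
    {s : Set E} (hs : ∀ x ∈ s, ∃ y, (x, y) ∈ Γ) :
    ∃ φ : Algebra.adjoin k s →ₐ[k] F, ∀ (a : Algebra.adjoin k s) y, (a.1, y) ∈ Γ ↔ φ a = y := by
  let π : Γ →ₐ[k] E := (AlgHom.fst k E F).comp Γ.val
  have hπ : Function.Injective π := by
    rw [injective_iff_map_eq_zero]
    rintro ⟨⟨x, y⟩, hxy⟩ (rfl : x = 0)
    exact Subtype.ext (Prod.ext rfl (hΓ y hxy))
  have hle : Algebra.adjoin k s ≤ π.range := Algebra.adjoin_le fun x hx =>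
    let ⟨y, hy⟩ := hs x hx
    ⟨⟨(x, y), hy⟩, rfl⟩
  let lift : Algebra.adjoin k s →ₐ[k] Γ :=
    (AlgEquiv.ofInjective π hπ).symm.toAlgHom.comp (Subalgebra.inclusion hle)
  have hlift (a : Algebra.adjoin k s) : π (lift a) = a :=
    congrArg Subtype.val ((AlgEquiv.ofInjective π hπ).apply_symm_apply (Subalgebra.inclusion hle a))
  refine ⟨((AlgHom.snd k E F).comp Γ.val).comp lift, fun a y => ⟨fun hy => ?_, ?_⟩⟩
  · have heq : lift a = ⟨(a.1, y), hy⟩ := hπ (hlift a)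
    exact congrArg (fun z : Γ => z.1.2) heq
  · rintro rfl
    rw [← hlift a]
    exact (lift a).2

end Graph

section Intertwining

variable {k V M ι σ : Type*} [CommRing k] [AddCommGroup V] [Module k V] [AddCommGroup M]
  [Module k M]

/-- The pairs of endomorphisms of `V` and `M` intertwined by all the maps `θ i`. If these are
jointly injective, the pairs form the graph of a partial function from `End V` to `End M`. -/
def intertwiningPairs (θ : ι → M →ₗ[k] V) : Subalgebra k (Module.End k V × Module.End k M) where
  carrier := {x | ∀ i v, x.1 (θ i v) = θ i (x.2 v)}
  mul_mem' hx hy i v := by simp [hy i v, hx i]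
  add_mem' hx hy i v := by simp [hx i v, hy i v]
  algebraMap_mem' r i v := by simp [Module.algebraMap_end_apply]

lemma exists_algHom_adjoin_of_intertwining (θ : ι → M →ₗ[k] V)
    (hθ : ∀ v, (∀ i, θ i v = 0) → v = 0) (D : σ → Module.End k V) (E : σ → Module.End k M)
    (hDE : ∀ i j v, D j (θ i v) = θ i (E j v)) :
    ∃ Φ : Algebra.adjoin k (Set.range D) →ₐ[k] Module.End k M,
      ∀ j, Φ ⟨D j, Algebra.subset_adjoin ⟨j, rfl⟩⟩ = E j := by
  obtain ⟨Φ, hΦ⟩ := exists_algHom_adjoin_of_graph (intertwiningPairs θ)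
    (fun y hy => LinearMap.ext fun v => hθ _ fun i => (hy i v).symm)
    (s := Set.range D) (by rintro _ ⟨j, rfl⟩; exact ⟨E j, fun i => hDE i j⟩)
  exact ⟨Φ, fun j => (hΦ _ _).1 fun i => hDE i j⟩

end Intertwining

section Fractions

variable {k R K S : Type*} [CommRing k] [CommRing R] [Algebra k R] [CommRing K] [Algebra R K]
  [FaithfulSMul R K] [Algebra k K] [IsScalarTower k R K] [CommRing S] [IsDomain S] [Algebra k S]

/-- The pairs `(f, y)` such that `f` is a fraction `N / M` and `y` is `φ N / φ M`, with the
divisions expressed by multiplication: the graph of the largest extension of `φ` to fractions. -/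
def fractionPairs (φ : R →ₐ[k] S) : Subalgebra k (K × S) where
  carrier := {x | ∃ N M : R, φ M ≠ 0 ∧ x.1 * algebraMap R K M = algebraMap R K N ∧
    x.2 * φ M = φ N}
  mul_mem' := by
    rintro ⟨f, y⟩ ⟨g, z⟩ ⟨N, M, hM, hf, hy⟩ ⟨N', M', hM', hg, hz⟩
    refine ⟨N * N', M * M', by simp [hM, hM'], ?_, ?_⟩
    · simp only [Prod.mk_mul_mk, map_mul, ← hf, ← hg]; ring
    · simp only [Prod.mk_mul_mk, map_mul, ← hy, ← hz]; ring
  add_mem' := by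
    rintro ⟨f, y⟩ ⟨g, z⟩ ⟨N, M, hM, hf, hy⟩ ⟨N', M', hM', hg, hz⟩
    refine ⟨N * M' + N' * M, M * M', by simp [hM, hM'], ?_, ?_⟩
    · simp only [Prod.mk_add_mk, map_mul, map_add, ← hf, ← hg]; ring
    · simp only [Prod.mk_add_mk, map_mul, map_add, ← hy, ← hz]; ring
  algebraMap_mem' r :=
    ⟨algebraMap k R r, 1, by simp, by simp [← IsScalarTower.algebraMap_apply], by simp⟩

lemma exists_algHom_adjoin_of_fractions (φ : R →ₐ[k] S) {s : Set K}
    (hs : ∀ f ∈ s, ∃ N M : R, φ M ≠ 0 ∧ f * algebraMap R K M = algebraMap R K N ∧ φ M ∣ φ N) :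
    ∃ e : Algebra.adjoin k s →ₐ[k] S, ∀ (f : Algebra.adjoin k s) (N M : R),
      f.1 * algebraMap R K M = algebraMap R K N → e f * φ M = φ N := by
  have hzero : ∀ y, ((0 : K), y) ∈ fractionPairs φ → y = 0 := by
    rintro y ⟨N, M, hM, hN, hy⟩
    have hN0 : N = 0 := FaithfulSMul.algebraMap_injective R K (by simpa using hN.symm)
    simpa [hN0, hM] using hy
  obtain ⟨e, he⟩ := exists_algHom_adjoin_of_graph (fractionPairs φ) hzero (s := s) (by
    intro f hf
    obtain ⟨N, M, hM, hfN, y, hy⟩ := hs f hf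
    exact ⟨y, N, M, hM, hfN, by rw [hy, mul_comm]⟩)
  refine ⟨e, fun f N M hf => ?_⟩
  obtain ⟨N', M', hM', hf', he'⟩ := (he f (e f)).2 rfl
  have hcross : N * M' = N' * M := FaithfulSMul.algebraMap_injective R K (by
    simp only [map_mul, ← hf, ← hf']; ring)
  apply mul_right_cancel₀ hM'
  calc e f * φ M * φ M' = φ (N' * M) := by rw [map_mul, ← he']; ring
    _ = φ N * φ M' := by rw [← hcross, map_mul]

end Fractions

section Line

variable {k σ : Type*} [CommRing k]

open scoped Classical in
/-- Restriction of polynomials to the affine line through `c` in the direction of the coordinate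
`z`, expanded in the local parameter at `c`. -/
def lineThrough (z : σ) (c : σ → k) : MvPolynomial σ k →ₐ[k] k⟦X⟧ :=
  aeval fun j => PowerSeries.C (c j) + if j = z then PowerSeries.X else 0

variable {z j : σ} {c : σ → k}

lemma lineThrough_X_self : lineThrough z c (X z) = PowerSeries.C (c z) + PowerSeries.X := by
  simp [lineThrough]

lemma lineThrough_X_of_ne (hj : j ≠ z) : lineThrough z c (X j) = PowerSeries.C (c j) := by
  simp [lineThrough, hj]

lemma lineThrough_C (a : k) : lineThrough z c (C a) = PowerSeries.C a :=
  aeval_C ..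

lemma constantCoeff_lineThrough (F : MvPolynomial σ k) :
    PowerSeries.constantCoeff (lineThrough z c F) = eval c F := by
  induction F using MvPolynomial.induction_on with
  | C a => simp
  | add F G hF hG => simp [hF, hG]
  | mul_X F j hF =>
    by_cases hj : j = z
    · simp [hF, hj, lineThrough_X_self]
    · simp [hF, lineThrough_X_of_ne hj]

variable (k) in
/-- The Laurent polynomials over the polynomial ring, encoded as finitely supported functions on the
exponents, whose coefficients vanish at the point `1`, and in negative degrees to second order along
the line in the direction of `j`. -/
def vanishingAtOne (j : σ) : Submodule k (ℤ →₀ MvPolynomial σ k) where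
  carrier := {f | ∀ n, PowerSeries.X ^ (if n < 0 then 2 else 1) ∣ lineThrough j 1 (f n)}
  add_mem' hf hg n := by simpa using dvd_add (hf n) (hg n)
  zero_mem' n := by simp
  smul_mem' a f hf n := by simpa using dvd_smul_of_dvd a (hf n)

lemma single_mem_vanishingAtOne {n : ℤ} {F : MvPolynomial σ k} :
    Finsupp.single n F ∈ vanishingAtOne k j ↔
      PowerSeries.X ^ (if n < 0 then 2 else 1) ∣ lineThrough j 1 F := by
  refine ⟨fun h => by simpa using h n, fun h r => ?_⟩
  rcases eq_or_ne n r with rfl | hnr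
  · simpa using h
  · simp [Finsupp.single_eq_of_ne' hnr]

end Line

section InfiniteBlowup

variable {k σ : Type*} [Field k]

/-- The generators of the infinite blowup of affine space at the points `c i`: the coordinates and
the slopes from the points `c i`, measured against the coordinate `z`. -/
def infiniteBlowupGenerators (z : σ) (c : ℕ → σ → k) : Set (FractionRing (MvPolynomial σ k)) :=
  (Set.range fun j : σ => algebraMap (MvPolynomial σ k) (FractionRing (MvPolynomial σ k)) (X j)) ∪
    {x : FractionRing (MvPolynomial σ k) | ∃ (j : σ) (i : ℕ), j ≠ z ∧
      x = (algebraMap (MvPolynomial σ k) (FractionRing (MvPolynomial σ k)) (X j) -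
            algebraMap k (FractionRing (MvPolynomial σ k)) (c i j)) *
          (algebraMap (MvPolynomial σ k) (FractionRing (MvPolynomial σ k)) (X z) -
            algebraMap k (FractionRing (MvPolynomial σ k)) (c i z))⁻¹}

/-- The infinite blowup of affine space at the points `c i`, which are assumed to be separated by
the coordinate `z`. -/
def infiniteBlowup (z : σ) (c : ℕ → σ → k) : Subalgebra k (FractionRing (MvPolynomial σ k)) :=
  Algebra.adjoin k (infiniteBlowupGenerators z c)

variable {z : σ}

lemma X_sub_C_ne_zero (z : σ) (a : k) : (X z - C a : MvPolynomial σ k) ≠ 0 := by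
  intro h
  simpa using congrArg (eval fun _ => a + 1) h

lemma slope_mul_algebraMap (c : σ → k) (j : σ) :
    (algebraMap (MvPolynomial σ k) (FractionRing (MvPolynomial σ k)) (X j) -
        algebraMap k (FractionRing (MvPolynomial σ k)) (c j)) *
      (algebraMap (MvPolynomial σ k) (FractionRing (MvPolynomial σ k)) (X z) -
        algebraMap k (FractionRing (MvPolynomial σ k)) (c z))⁻¹ *
      algebraMap (MvPolynomial σ k) (FractionRing (MvPolynomial σ k)) (X z - C (c z)) =
      algebraMap (MvPolynomial σ k) (FractionRing (MvPolynomial σ k)) (X j - C (c j)) := by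
  have hne : algebraMap (MvPolynomial σ k) (FractionRing (MvPolynomial σ k)) (X z - C (c z)) ≠ 0 :=
    (map_ne_zero_iff _ (IsFractionRing.injective _ _)).2 (X_sub_C_ne_zero z (c z))
  simp only [IsScalarTower.algebraMap_apply k (MvPolynomial σ k) (FractionRing (MvPolynomial σ k)),
    algebraMap_eq, ← map_sub]
  exact inv_mul_cancel_right₀ hne _

lemma exists_slope_infiniteBlowup (c : ℕ → σ → k) {j : σ} (hj : j ≠ z) (l : ℕ) :
    ∃ b : infiniteBlowup z c,
      b.1 * algebraMap _ _ (X z - C (c l z) : MvPolynomial σ k) =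
        algebraMap _ _ (X j - C (c l j) : MvPolynomial σ k) :=
  ⟨⟨_, Algebra.subset_adjoin (.inr ⟨j, l, hj, rfl⟩)⟩, slope_mul_algebraMap (c l) j⟩

/-- The direction of `z` is transversal to the exceptional divisors: the slope from `c m` vanishes
on the line through `c m` in this direction, and the other slopes are regular at `c m`. -/
lemma lineThrough_dvd_of_mem_infiniteBlowupGenerators {c : ℕ → σ → k}
    (hc : Function.Injective fun n => c n z) (m : ℕ) {f : FractionRing (MvPolynomial σ k)}
    (hf : f ∈ infiniteBlowupGenerators z c) :
    ∃ N M : MvPolynomial σ k, lineThrough z (c m) M ≠ 0 ∧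
      f * algebraMap _ _ M = algebraMap _ _ N ∧
      lineThrough z (c m) M ∣ lineThrough z (c m) N := by
  have hz (d : k) :
      lineThrough z (c m) (X z - C d) = PowerSeries.C (c m z - d) + PowerSeries.X := by
    rw [map_sub, lineThrough_X_self, lineThrough_C, map_sub]; ring
  obtain ⟨j, rfl⟩ | ⟨j, l, hj, rfl⟩ := hf
  · exact ⟨X j, 1, by simp, by simp, by simp⟩
  · refine ⟨X j - C (c l j), X z - C (c l z), ?_, slope_mul_algebraMap (c l) j, ?_⟩
    · intro h
      simpa [hz] using congrArg (PowerSeries.coeff 1) h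
    · rcases eq_or_ne l m with rfl | hlm
      · simp [lineThrough_X_of_ne hj]
      · refine IsUnit.dvd (PowerSeries.isUnit_iff_constantCoeff.2 ?_)
        simpa [hz, sub_eq_zero] using hc.ne hlm.symm

lemma exists_point_infiniteBlowup {c : ℕ → σ → k} (hc : Function.Injective fun n => c n z)
    (m : ℕ) : ∃ e : infiniteBlowup z c →ₐ[k] k, ∀ (f : infiniteBlowup z c) (N M : MvPolynomial σ k),
      f.1 * algebraMap _ _ M = algebraMap _ _ N → e f * eval (c m) M = eval (c m) N := by
  obtain ⟨e, he⟩ := exists_algHom_adjoin_of_fractions (lineThrough z (c m))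
    fun _ => lineThrough_dvd_of_mem_infiniteBlowupGenerators hc m
  let const : k⟦X⟧ →ₐ[k] k := AlgHom.mk' PowerSeries.constantCoeff fun r x => by simp
  refine ⟨const.comp e, fun f N M hf => ?_⟩
  have h := congrArg PowerSeries.constantCoeff (he f N M hf)
  rwa [map_mul, constantCoeff_lineThrough, constantCoeff_lineThrough] at h

end InfiniteBlowup

section MulIndependent

/-- A family of elements of a commutative monoid is multiplicatively independent if distinct
monomials in these elements have distinct values. -/
def MulIndependent {M σ : Type*} [CommMonoid M] (p : σ → M) : Prop :=
  Function.Injective fun α : σ →₀ ℕ => α.prod fun i n => p i ^ n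

namespace MulIndependent

variable {k M σ : Type*} [CommRing k] [CommMonoid M]

lemma of_algebraicIndependent {R : Type*} [CommRing R] [Nontrivial R] [Algebra R k] {p : σ → k}
    (hp : AlgebraicIndependent R p) : MulIndependent p := by
  intro α β h
  have haeval (γ : σ →₀ ℕ) : aeval p (monomial γ (1 : R)) = γ.prod fun i n => p i ^ n := by
    rw [aeval_monomial, map_one, one_mul]
  have hmonomial : monomial α (1 : R) = monomial β 1 :=
    hp (by rw [haeval, haeval]; exact h)
  exact monomial_left_injective one_ne_zero hmonomial

lemma pow_injective {p : σ → M} (hp : MulIndependent p) (i : σ) :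
    Function.Injective fun n : ℕ => p i ^ n := fun m n h =>
  Finsupp.single_injective i (hp (by simpa using! h))

lemma pow_ne_one {p : σ → M} (hp : MulIndependent p) (i : σ) {n : ℕ} (hn : n ≠ 0) :
    p i ^ n ≠ 1 := fun h =>
  hn (hp.pow_injective i (by simpa using h))

variable {p : σ → k}

lemma ne_zero (hp : MulIndependent p) (i : σ) : p i ≠ 0 := fun h =>
  absurd (hp.pow_injective i (a₁ := 1) (a₂ := 2) (by simp [h])) (by decide)

lemma sub_one_ne_zero (hp : MulIndependent p) (i : σ) : p i - 1 ≠ 0 :=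
  sub_ne_zero.2 (by simpa using hp.pow_ne_one i one_ne_zero)

/-- The monomials restrict to distinct characters of the monoid of the exponents `n`, so Dedekind's
independence of characters applies. -/
lemma eq_zero_of_forall_eval_pow_eq_zero [IsDomain k] (hp : MulIndependent p)
    {F : MvPolynomial σ k} (hF : ∀ n : ℕ, eval (p ^ n) F = 0) : F = 0 := by
  let χ (α : σ →₀ ℕ) : Multiplicative ℕ →* k := powersHom k (α.prod fun i n => p i ^ n)
  have hχ : Function.Injective χ := (powersHom k).injective.comp hp
  have hli := (linearIndependent_monoidHom (Multiplicative ℕ) k).comp χ hχ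
  have hcoeff := linearIndependent_iff'.1 hli F.support (fun α => F.coeff α) (by
    funext n
    rw [Pi.zero_apply, ← hF n.toAdd, eval_eq]
    simp only [Finset.sum_apply, Pi.smul_apply, Function.comp_apply, smul_eq_mul, χ,
      powersHom_apply, Finsupp.prod, Pi.pow_apply, ← Finset.prod_pow, ← pow_mul, mul_comm])
  ext α
  by_cases hα : α ∈ F.support
  · simpa using hcoeff α hα
  · simpa using hα

end MulIndependent

end MulIndependent

section GenericEulerian

variable {k σ : Type*} [Field k]

/-- The coefficient with which the generic Eulerian derivative maps degree `n` to degree `n - 1`: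
the indeterminate `X i` deforms `p i ^ n` to `p i ^ n * X i` in the coefficient of `D i`. -/
def genericCoeff (p : σ → k) (i : σ) (n : ℤ) : MvPolynomial σ k :=
  C (p i - 1)⁻¹ * (C (p i ^ n) * X i - 1)

/-- The generic Eulerian derivative, acting on Laurent polynomials with coefficients in the
polynomial ring; these are encoded as finitely supported functions on the exponents. -/
def genericEulerian (p : σ → k) (i : σ) : Module.End k (ℤ →₀ MvPolynomial σ k) :=
  Finsupp.lsum k fun n => Finsupp.lsingle (n - 1) ∘ₗ LinearMap.mulLeft k (genericCoeff p i n)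

/-- The specialization at the point `p ^ N`, which the shift of degrees by `N` turns into a map
commuting with the Eulerian derivatives. -/
def specialize (p : σ → k) (N : ℕ) : (ℤ →₀ MvPolynomial σ k) →ₗ[k] LaurentPolynomial k :=
  Finsupp.lsum k fun n =>
    LinearMap.toSpanSingleton k _ (LaurentPolynomial.T (n + N)) ∘ₗ (aeval (p ^ N)).toLinearMap

variable (p : σ → k) (i : σ)

lemma genericEulerian_single (n : ℤ) (G : MvPolynomial σ k) :
    genericEulerian p i (Finsupp.single n G) = Finsupp.single (n - 1) (genericCoeff p i n * G) := by
  simp [genericEulerian]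

lemma genericEulerian_apply (f : ℤ →₀ MvPolynomial σ k) (n : ℤ) :
    genericEulerian p i f n = genericCoeff p i (n + 1) * f (n + 1) := by
  induction f using Finsupp.induction_linear with
  | zero => simp
  | add f g hf hg => simp [hf, hg, mul_add]
  | single m G =>
    rw [genericEulerian_single, Finsupp.single_apply, Finsupp.single_apply]
    by_cases h : m = n + 1
    · simp [h]
    · rw [if_neg h, if_neg (by omega), mul_zero]

lemma genericEulerian_pow_single (l : ℕ) (n : ℤ) (G : MvPolynomial σ k) :
    (genericEulerian p i ^ l) (Finsupp.single n G) =
      Finsupp.single (n - l) ((∏ r ∈ Finset.range l, genericCoeff p i (n - r)) * G) := by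
  induction l with
  | zero => simp
  | succ l ih =>
    rw [pow_succ', Module.End.mul_apply, ih, genericEulerian_single, Finset.prod_range_succ_comm,
      mul_assoc]
    congr 1
    push_cast
    ring

lemma specialize_single (N : ℕ) (n : ℤ) (G : MvPolynomial σ k) :
    specialize p N (Finsupp.single n G) = eval (p ^ N) G • LaurentPolynomial.T (n + N) := by
  simp [specialize, aeval_eq_eval]

lemma coeff_specialize (N : ℕ) (f : ℤ →₀ MvPolynomial σ k) (n : ℤ) :
    (specialize p N f).coeff (n + N) = eval (p ^ N) (f n) := by
  induction f using Finsupp.induction_linear with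
  | zero => simp
  | add f g hf hg => simp [hf, hg]
  | single m G =>
    rw [specialize_single]
    by_cases h : m = n <;> simp [h]

variable {p i}

lemma eq_zero_of_forall_specialize_eq_zero (hp : MulIndependent p) {f : ℤ →₀ MvPolynomial σ k}
    (hf : ∀ N, specialize p N f = 0) : f = 0 := by
  ext1 n
  refine hp.eq_zero_of_forall_eval_pow_eq_zero fun N => ?_
  rw [← coeff_specialize, hf N]
  rfl

lemma eulerian_specialize (hp : p i ≠ 0) {D : Module.End k (LaurentPolynomial k)}
    (hD : ∀ n : ℤ, D (LaurentPolynomial.T n) =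
      ((p i ^ n - 1) / (p i - 1)) • LaurentPolynomial.T (n - 1))
    (N : ℕ) (f : ℤ →₀ MvPolynomial σ k) :
    D (specialize p N f) = specialize p N (genericEulerian p i f) := by
  induction f using Finsupp.induction_linear with
  | zero => simp
  | add f g hf hg => simp [hf, hg]
  | single n G =>
    rw [genericEulerian_single, specialize_single, specialize_single, map_smul, hD, smul_smul]
    have hdegree : n + N - 1 = n - 1 + (N : ℤ) := by ring
    rw [hdegree]
    congr 1
    simp only [zpow_add₀ hp, zpow_natCast, genericCoeff, map_mul, eval_C, map_sub, eval_X,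
      Pi.pow_apply, map_one]
    ring

lemma exists_generic_deformation (hp : MulIndependent p)
    {D : σ → Module.End k (LaurentPolynomial k)}
    (hD : ∀ i, ∀ n : ℤ, D i (LaurentPolynomial.T n) =
      ((p i ^ n - 1) / (p i - 1)) • LaurentPolynomial.T (n - 1)) :
    ∃ Φ : Algebra.adjoin k (Set.range D) →ₐ[k] Module.End k (ℤ →₀ MvPolynomial σ k),
      ∀ i, Φ ⟨D i, Algebra.subset_adjoin ⟨i, rfl⟩⟩ = genericEulerian p i :=
  exists_algHom_adjoin_of_intertwining (specialize p)
    (fun _ => eq_zero_of_forall_specialize_eq_zero hp) D (genericEulerian p)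
    fun N i f => eulerian_specialize (hp.ne_zero i) (hD i) N f

end GenericEulerian

section Vanishing

variable {k σ : Type*} [Field k] {p : σ → k} {i j : σ} {l m : ℕ}

lemma eval_one_genericCoeff (n : ℤ) :
    eval 1 (genericCoeff p i n) = (p i - 1)⁻¹ * (p i ^ n - 1) := by
  simp [genericCoeff]

lemma eval_one_prod_genericCoeff_ne_zero (hp : MulIndependent p) (hl : l ≤ m) :
    eval 1 (∏ r ∈ Finset.range l, genericCoeff p i ((m : ℤ) - r)) ≠ 0 := by
  rw [map_prod]
  refine Finset.prod_ne_zero_iff.2 fun r hr => ?_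
  have hrm : r < m := (Finset.mem_range.1 hr).trans_le hl
  rw [eval_one_genericCoeff, ← Nat.cast_sub hrm.le, zpow_natCast]
  exact mul_ne_zero (inv_ne_zero (hp.sub_one_ne_zero i))
    (sub_ne_zero.2 (hp.pow_ne_one i (Nat.sub_ne_zero_of_lt hrm)))

/-- The only step from a nonnegative to a negative degree multiplies by the coefficient in degree
`0`, which vanishes at the point `1`. -/
lemma vanishingAtOne_mem_invtSubmodule_genericEulerian :
    vanishingAtOne k j ∈ (genericEulerian p i).invtSubmodule := by
  intro f hf n
  rw [genericEulerian_apply, map_mul]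
  rcases eq_or_ne n (-1) with rfl | hn
  · have hcoeff : PowerSeries.X ∣ lineThrough j 1 (genericCoeff p i 0) := by
      rw [PowerSeries.X_dvd_iff, constantCoeff_lineThrough, eval_one_genericCoeff]
      simp
    simpa [pow_two] using mul_dvd_mul hcoeff (hf 0)
  · have hsign : n + 1 < 0 ↔ n < 0 := by omega
    simpa only [hsign] using dvd_mul_of_dvd_right (hf (n + 1)) _

end Vanishing

section SlopeRelation

variable {k σ A A' : Type*} [Field k] [Ring A] [Algebra k A] [Ring A'] [Algebra k A']

/-- The combination of two monomials of degree `l + 1` in the Eulerian derivatives that annihilates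
`T m` if `β` is the slope of the line through `(p i ^ l, p j ^ l)` and `(p i ^ m, p j ^ m)`. -/
def slopeRelation (p : σ → k) (d : σ → A) (i j : σ) (l : ℕ) (β : k) : A :=
  (p j ^ l * (p j - 1)) • (d j * d i ^ l) - (β * (p i ^ l * (p i - 1))) • (d i * d i ^ l)

/-- The polynomial whose value at `1` is zero if and only if `β` is the slope of the line through
`(p i ^ l, p j ^ l)` and `(p i ^ m, p j ^ m)`. -/
def slopePolynomial (p : σ → k) (i j : σ) (l m : ℕ) (β : k) : MvPolynomial σ k :=
  (C (p j ^ m) * X j - C (p j ^ l)) - C β * (C (p i ^ m) * X i - C (p i ^ l))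

variable {p : σ → k} {i j : σ} {l m : ℕ} {β : k}

lemma map_slopeRelation (Φ : A →ₐ[k] A') (d : σ → A) :
    Φ (slopeRelation p d i j l β) = slopeRelation p (fun r => Φ (d r)) i j l β := by
  simp [slopeRelation]

lemma C_mul_genericCoeff (hp : MulIndependent p) (i : σ) (l m : ℕ) :
    C (p i ^ l * (p i - 1)) * genericCoeff p i ((m : ℤ) - l) =
      C (p i ^ m) * X i - C (p i ^ l) := by
  have hpow : p i ^ l * p i ^ ((m : ℤ) - l) = p i ^ m := by
    rw [zpow_sub₀ (hp.ne_zero i), zpow_natCast, zpow_natCast,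
      mul_div_cancel₀ _ (pow_ne_zero l (hp.ne_zero i))]
  calc C (p i ^ l * (p i - 1)) * genericCoeff p i ((m : ℤ) - l)
      = C ((p i - 1) * (p i - 1)⁻¹) * (C (p i ^ l * p i ^ ((m : ℤ) - l)) * X i - C (p i ^ l)) := by
        simp only [genericCoeff, C_mul]; ring
    _ = C (p i ^ m) * X i - C (p i ^ l) := by
        rw [mul_inv_cancel₀ (hp.sub_one_ne_zero i), hpow, C_1, one_mul]

lemma slopeRelation_genericEulerian_single (hp : MulIndependent p) :
    slopeRelation p (genericEulerian p) i j l β (Finsupp.single (m : ℤ) 1) =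
      Finsupp.single ((m : ℤ) - l - 1) (slopePolynomial p i j l m β *
        ∏ r ∈ Finset.range l, genericCoeff p i ((m : ℤ) - r)) := by
  simp only [slopeRelation, LinearMap.sub_apply, LinearMap.smul_apply, Module.End.mul_apply,
    genericEulerian_pow_single, genericEulerian_single, mul_one, Finsupp.smul_single,
    ← Finsupp.single_sub]
  rw [slopePolynomial, ← C_mul_genericCoeff hp, ← C_mul_genericCoeff hp]
  simp only [smul_eq_C_mul, C_mul]
  congr 1
  ring

lemma slopeRelation_mem_vanishingAtOne (hp : MulIndependent p) (hl : l < m)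
    (hβ : β * (p i ^ m - p i ^ l) = p j ^ m - p j ^ l) :
    slopeRelation p (genericEulerian p) i j l β (Finsupp.single (m : ℤ) 1) ∈
      vanishingAtOne k j := by
  have hnonneg : ¬ (m : ℤ) - l - 1 < 0 := by omega
  rw [slopeRelation_genericEulerian_single hp, single_mem_vanishingAtOne, if_neg hnonneg, pow_one,
    PowerSeries.X_dvd_iff, constantCoeff_lineThrough]
  simp [slopePolynomial, hβ]

lemma slopeRelation_notMem_vanishingAtOne (hp : MulIndependent p) (hij : i ≠ j) :
    slopeRelation p (genericEulerian p) i j m β (Finsupp.single (m : ℤ) 1) ∉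
      vanishingAtOne k j := by
  have hneg : (m : ℤ) - m - 1 < 0 := by omega
  have hslope : lineThrough j 1 (slopePolynomial p i j m m β) =
      PowerSeries.X * PowerSeries.C (p j ^ m) := by
    simp only [slopePolynomial, map_sub, map_mul, lineThrough_C, lineThrough_X_self,
      lineThrough_X_of_ne hij, Pi.one_apply, map_one]
    ring
  rw [slopeRelation_genericEulerian_single hp, single_mem_vanishingAtOne, if_pos hneg, map_mul,
    hslope, pow_two, mul_assoc, mul_dvd_mul_iff_left PowerSeries.X_ne_zero, PowerSeries.X_dvd_iff,
    map_mul, constantCoeff_lineThrough, PowerSeries.constantCoeff_C]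
  exact mul_ne_zero (pow_ne_zero m (hp.ne_zero j)) (eval_one_prod_genericCoeff_ne_zero hp le_rfl)

end SlopeRelation

section Tensor

variable {k σ A B : Type*} [Field k] [Ring A] [Algebra k A] [Ring B] [Algebra k B]

/-- Evaluation of the second tensor factor at a `k`-point. -/
def evalRight (A : Type*) [Ring A] [Algebra k A] (e : B →ₐ[k] k) : A ⊗[k] B →ₐ[k] A :=
  (Algebra.TensorProduct.rid k k A).toAlgHom.comp (Algebra.TensorProduct.map (AlgHom.id k A) e)

/-- The element of the tensor product whose value at a `k`-point of `B` is the slope relation for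
the value of `b`. -/
def slopeTensor (p : σ → k) (d : σ → A) (i j : σ) (l : ℕ) (b : B) : A ⊗[k] B :=
  ((p j ^ l * (p j - 1)) • (d j * d i ^ l)) ⊗ₜ 1 -
    ((p i ^ l * (p i - 1)) • (d i * d i ^ l)) ⊗ₜ b

lemma evalRight_slopeTensor (e : B →ₐ[k] k) (p : σ → k) (d : σ → A) (i j : σ) (l : ℕ) (b : B) :
    evalRight A e (slopeTensor p d i j l b) = slopeRelation p d i j l (e b) := by
  simp [evalRight, slopeTensor, slopeRelation, smul_smul]

variable {p : σ → k} {i j : σ}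

lemma not_isNoetherianRing_tensorProduct_of_deformation (hp : MulIndependent p) (hij : i ≠ j)
    {d : σ → A} {Φ : A →ₐ[k] Module.End k (ℤ →₀ MvPolynomial σ k)}
    (hΦ : ∀ r, Φ (d r) = genericEulerian p r)
    (hinv : ∀ a, vanishingAtOne k j ∈ (Φ a).invtSubmodule) (b : ℕ → B) (e : ℕ → B →ₐ[k] k)
    (he : ∀ m l, e m (b l) * (p i ^ m - p i ^ l) = p j ^ m - p j ^ l) :
    ¬ IsNoetherianRing (A ⊗[k] B) := by
  let I (m : ℕ) : Ideal (A ⊗[k] B) :=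
    transporter (Φ.comp (evalRight A (e m))) (vanishingAtOne k j)
      (fun x => hinv (evalRight A (e m) x)) (Finsupp.single (m : ℤ) 1)
  have hI (m l : ℕ) : slopeTensor p d i j l (b l) ∈ I m ↔
      slopeRelation p (genericEulerian p) i j l (e m (b l)) (Finsupp.single (m : ℤ) 1) ∈
        vanishingAtOne k j := by
    rw [← funext hΦ, ← map_slopeRelation, ← evalRight_slopeTensor]
    rfl
  refine not_isNoetherian_of_mem_of_notMem I (fun l => slopeTensor p d i j l (b l))
    (fun m l hl => ?_) fun m => ?_
  · exact (hI m l).2 (slopeRelation_mem_vanishingAtOne hp hl (he m l))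
  · exact (hI m m).not.2 (slopeRelation_notMem_vanishingAtOne hp hij)

lemma not_isNoetherianRing_adjoin_eulerian_tensorProduct (hp : MulIndependent p) (hij : i ≠ j)
    {D : σ → Module.End k (LaurentPolynomial k)}
    (hD : ∀ i, ∀ n : ℤ, D i (LaurentPolynomial.T n) =
      ((p i ^ n - 1) / (p i - 1)) • LaurentPolynomial.T (n - 1))
    (b : ℕ → B) (e : ℕ → B →ₐ[k] k)
    (he : ∀ m l, e m (b l) * (p i ^ m - p i ^ l) = p j ^ m - p j ^ l) :
    ¬ IsNoetherianRing (Algebra.adjoin k (Set.range D) ⊗[k] B) := by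
  obtain ⟨Φ, hΦ⟩ := exists_generic_deformation hp hD
  refine not_isNoetherianRing_tensorProduct_of_deformation hp hij hΦ
    (mem_invtSubmodule_of_adjoin ?_) b e he
  rintro _ ⟨r, rfl⟩
  exact hΦ r ▸ vanishingAtOne_mem_invtSubmodule_genericEulerian

end Tensor

end EulerianBlowup

open EulerianBlowup in
open scoped TensorProduct in
theorem stmt_3_general {k σ : Type*} [Field k] {p : σ → k} (hp : MulIndependent p)
    {D : σ → Module.End k (LaurentPolynomial k)}
    (hD : ∀ i, ∀ n : ℤ, D i (LaurentPolynomial.T n) =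
      ((p i ^ n - 1) / (p i - 1)) • LaurentPolynomial.T (n - 1))
    {z j : σ} (hj : j ≠ z) :
    ¬ IsNoetherianRing
      (Algebra.adjoin k (Set.range D) ⊗[k] infiniteBlowup z fun m r => p r ^ m) := by
  choose e he using exists_point_infiniteBlowup (c := fun m r => p r ^ m) (hp.pow_injective z)
  choose b hb using exists_slope_infiniteBlowup (fun m r => p r ^ m) hj
  refine not_isNoetherianRing_adjoin_eulerian_tensorProduct hp hj.symm hD b e fun m l => ?_
  simpa using he m (b l) _ _ (hb l)

/-- for the algebra `A` generated by `t ≥ 2` Eulerian derivatives with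
parameters algebraically independent over the prime subfield, and `B` the infinite
blowup of `𝔸^t` at the points `cᵢ = (p₁ⁱ, …, p_tⁱ)`, the ring `A ⊗_k B` is not left
noetherian. -/
theorem stmt_3 {k : Type*} [Field k] [IsAlgClosed k]
    (t : ℕ) (ht : 2 ≤ t) (p : Fin t → k)
    (hp : AlgebraicIndependent (⊥ : Subfield k) p)
    (D : Fin t → Module.End k (LaurentPolynomial k))
    (hD : ∀ i, ∀ n : ℤ, D i (LaurentPolynomial.T n)
        = ((p i ^ n - 1) / (p i - 1)) • LaurentPolynomial.T (n - 1)) :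
    ¬ IsNoetherianRing (TensorProduct k
      (Algebra.adjoin k (Set.range D))
      (Algebra.adjoin k
        ((Set.range fun j : Fin t =>
            algebraMap (MvPolynomial (Fin t) k) (FractionRing (MvPolynomial (Fin t) k))
              (MvPolynomial.X j)) ∪
         {x : FractionRing (MvPolynomial (Fin t) k) | ∃ (j : Fin t) (i : ℕ),
            j ≠ ⟨0, by omega⟩ ∧
            x = (algebraMap (MvPolynomial (Fin t) k) (FractionRing (MvPolynomial (Fin t) k))
                    (MvPolynomial.X j) -
                  algebraMap k (FractionRing (MvPolynomial (Fin t) k)) (p j ^ i)) *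
                (algebraMap (MvPolynomial (Fin t) k) (FractionRing (MvPolynomial (Fin t) k))
                    (MvPolynomial.X ⟨0, by omega⟩) -
                  algebraMap k (FractionRing (MvPolynomial (Fin t) k))
                    (p ⟨0, by omega⟩ ^ i))⁻¹}))) := by
  have hj : (⟨1, by omega⟩ : Fin t) ≠ ⟨0, by omega⟩ := by simp
  exact stmt_3_general (.of_algebraicIndependent hp) hD hj
end
end

section
/- Let t ≥ 2 and let c_i = (a_{i1}, …, a_{it}) ∈ k^t (i ∈ ℕ) be a sequence of points whose first coordinates a_{i1} are pairwise distinct, and assume the set {c_i : i ∈ ℕ} is critically dense in 𝔸^t, i.e. every nonzero polynomial in k[y_1,…,y_t] vanishes at c_i for only finitely many i. Then the infinite blowup B of 𝔸^t at the sequence (c_i) — the k-subalgebra of the rational function field k(y_1,…,y_t) generated by y_1,…,y_t together with all elements (y_j − a_{ij})·(y_1 − a_{i1})^{−1} for 2 ≤ j ≤ t and i ∈ ℕ — is a noetherian ring and a unique factorization domain. -/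
set_option synthInstance.maxHeartbeats 1000000
set_option maxHeartbeats 4000000
set_option maxSynthPendingDepth 3

noncomputable section

/-!
Write `ℓ i = X o - c i o`. Multiplying by suitable products of the `ℓ i` clears the denominators of
any element of the infinite blowup `B`, so `B` lies between a polynomial ring and a localization
of it, in several ways.

Each `ℓ n` is prime in `B`: on the chart of the blowup at `c n` the ring of functions is again a
polynomial ring, `ℓ n` is one of its variables, and every other `ℓ i = ℓ n + (c n o - c i o)`
is coprime to it. If `B` is noetherian, Nagata's criterion then makes it factorial.

For noetherianity, a nonzero ideal of `B` contains a nonzero polynomial `f`. Modulo `ℓ i` every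
polynomial equals its value at `c i`, so `ℓ i` is coprime to `f` in `B` unless `f` vanishes at
`c i`, which happens for finitely many `i` only. Hence the ideal is extended from the subalgebra
that involves only these finitely many points, and this subalgebra is of finite type.
-/

open MvPolynomial

/-- `HasDenominators φ M` says that multiplying by the image of some element of `M` moves any
given element of `B` into the image of `A`. This is the surjectivity axiom of a localization map,
but the elements of `M` need not become units in `B`. -/
def HasDenominators {A B : Type*} [CommSemiring A] [CommSemiring B] (φ : A →+* B)
    (M : Submonoid A) : Prop :=
  ∀ b, ∃ s ∈ M, ∃ a, φ s * b = φ a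

namespace HasDenominators

section CommSemiring

variable {A B : Type*} [CommSemiring A] [CommSemiring B] {φ : A →+* B} {M : Submonoid A}

theorem of_adjoin_eq_top {k : Type*} [CommSemiring k] [Algebra k A] [Algebra k B]
    {φ : A →ₐ[k] B} {G : Set B} (hG : Algebra.adjoin k G = ⊤)
    (h : ∀ g ∈ G, ∃ s ∈ M, ∃ a, φ s * g = φ a) : HasDenominators (φ : A →+* B) M := by
  intro b
  have hb : b ∈ Algebra.adjoin k G := hG ▸ Algebra.mem_top
  induction hb using Algebra.adjoin_induction with
  | mem g hg => exact h g hg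
  | algebraMap r => exact ⟨1, M.one_mem, algebraMap k A r, by simp⟩
  | add x y _ _ hx hy =>
    obtain ⟨s, hs, a, hsx⟩ := hx
    obtain ⟨t, ht, b, hty⟩ := hy
    refine ⟨s * t, M.mul_mem hs ht, t * a + s * b, ?_⟩
    simp only [map_add, map_mul, ← hsx, ← hty]
    ring
  | mul x y _ _ hx hy =>
    obtain ⟨s, hs, a, hsx⟩ := hx
    obtain ⟨t, ht, b, hty⟩ := hy
    exact ⟨s * t, M.mul_mem hs ht, a * b, by simp only [map_mul, ← hsx, ← hty, mul_mul_mul_comm]⟩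

theorem comap_ne_bot [NoZeroDivisors B] (h : HasDenominators φ M) (hM : ∀ s ∈ M, φ s ≠ 0)
    {I : Ideal B} (hI : I ≠ ⊥) : I.comap φ ≠ ⊥ := by
  obtain ⟨b, hbI, hb⟩ := Submodule.exists_mem_ne_zero_of_ne_bot hI
  obtain ⟨s, hs, a, ha⟩ := h b
  refine (Submodule.ne_bot_iff _).2 ⟨a, Ideal.mem_comap.2 (ha ▸ I.mul_mem_left _ hbI), ?_⟩
  rintro rfl
  exact mul_ne_zero (hM s hs) hb (by rw [ha, map_zero])

theorem map_comap_eq (h : HasDenominators φ M) {f : A} (hM : ∀ s ∈ M, IsCoprime (φ s) (φ f))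
    {I : Ideal B} (hf : φ f ∈ I) : (I.comap φ).map φ = I := by
  refine le_antisymm Ideal.map_comap_le fun b hb => ?_
  obtain ⟨s, hs, a, ha⟩ := h b
  obtain ⟨u, v, huv⟩ := hM s hs
  have haI : φ a ∈ I := ha ▸ I.mul_mem_left _ hb
  have hb_eq : b = u * φ a + v * b * φ f := by
    calc b = (u * φ s + v * φ f) * b := by rw [huv, one_mul]
      _ = u * φ a + v * b * φ f := by rw [← ha]; ring
  rw [hb_eq]
  exact Ideal.add_mem _ (Ideal.mul_mem_left _ _ (Ideal.mem_map_of_mem φ haI))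
    (Ideal.mul_mem_left _ _ (Ideal.mem_map_of_mem φ hf))

theorem prime_of_map_eq_map_mul (h : HasDenominators φ M) (hφ : Function.Injective φ) {q : A}
    (hq : Prime q) (hqM : ∀ s ∈ M, ¬ q ∣ s) {s : A} (hs : s ∈ M) {g : B} (hqg : φ q = φ s * g)
    (hg : ∀ t ∈ M, ∀ b, g ∣ φ t * b → g ∣ b) : Prime g := by
  have dvd_iff : ∀ {t a b}, t ∈ M → φ t * b = φ a → (g ∣ b ↔ q ∣ a) := by
    intro t a b ht hab
    constructor
    · rintro ⟨d, rfl⟩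
      obtain ⟨u, hu, e, hue⟩ := h d
      have hqe : q * (t * e) = u * s * a := hφ <| by
        simp only [map_mul, hqg, ← hue, ← hab]
        ring
      exact (hq.dvd_or_dvd (hqe ▸ dvd_mul_right q _)).resolve_left (hqM _ (M.mul_mem hu hs))
    · rintro ⟨r, rfl⟩
      exact hg t ht b ⟨φ s * φ r, by rw [hab, map_mul, hqg]; ring⟩
  refine ⟨?_, fun hunit => ?_, fun a b hab => ?_⟩
  · rintro rfl
    exact hq.ne_zero (hφ (by rw [hqg, mul_zero, map_zero]))
  · exact hqM 1 M.one_mem ((dvd_iff M.one_mem (mul_one (φ 1))).1 hunit.dvd)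
  · obtain ⟨t, ht, a', ha⟩ := h a
    obtain ⟨u, hu, b', hb⟩ := h b
    have hmul : φ (t * u) * (a * b) = φ (a' * b') := by
      simp only [map_mul, ← ha, ← hb, mul_mul_mul_comm]
    rw [dvd_iff ht ha, dvd_iff hu hb]
    exact hq.dvd_or_dvd ((dvd_iff (M.mul_mem ht hu) hmul).1 hab)

theorem prime_map (h : HasDenominators φ M) (hφ : Function.Injective φ) {q : A} (hq : Prime q)
    (hM : ∀ s ∈ M, IsCoprime s q) : Prime (φ q) :=
  h.prime_of_map_eq_map_mul hφ hq
    (fun s hs hdvd => hq.not_isUnit ((hM s hs).symm.isUnit_of_dvd' dvd_rfl hdvd))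
    M.one_mem (by rw [map_one, one_mul])
    fun s hs _ hdvd => ((hM s hs).symm.map φ).dvd_of_dvd_mul_left hdvd

end CommSemiring

theorem injective_of_comp {A B R : Type*} [CommRing A] [CommRing B] [NoZeroDivisors B] [Ring R]
    {φ : A →+* B} {M : Submonoid A} (h : HasDenominators φ M) (hM : ∀ s ∈ M, φ s ≠ 0)
    {ψ : B →+* R} (hψ : Function.Injective (ψ.comp φ)) : Function.Injective ψ := by
  rw [RingHom.injective_iff_ker_eq_bot] at hψ ⊢
  by_contra hker
  exact h.comap_ne_bot hM hker (by rw [RingHom.comap_ker, hψ])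

end HasDenominators

theorem exists_mem_closure_eq_mul_forall_not_dvd {α : Type*} [CommMonoidWithZero α]
    [IsCancelMulZero α] [WfDvdMonoid α] {S : Set α} (hS : ∀ p ∈ S, ¬ IsUnit p) {x : α}
    (hx : x ≠ 0) : ∃ s ∈ Submonoid.closure S, ∃ g, x = s * g ∧ ∀ p ∈ S, ¬ p ∣ g := by
  obtain ⟨g, ⟨s, hs, hsg⟩, hmin⟩ := (wellFounded_dvdNotUnit (α := α)).has_min
    {g | ∃ s ∈ Submonoid.closure S, x = s * g} ⟨x, 1, one_mem _, (one_mul x).symm⟩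
  refine ⟨s, hs, g, hsg, ?_⟩
  rintro p hp ⟨d, rfl⟩
  refine hmin d ⟨s * p, mul_mem hs (Submonoid.subset_closure hp), by rw [hsg, mul_assoc]⟩ ?_
  have hd : d ≠ 0 := by
    rintro rfl
    exact hx (by rw [hsg, mul_zero, mul_zero])
  exact ⟨hd, p, hS p hp, mul_comm p d⟩

theorem dvd_of_dvd_mul_of_mem_closure {α : Type*} [CommMonoidWithZero α] [IsCancelMulZero α]
    {S : Set α} (hS : ∀ p ∈ S, Prime p) {g : α} (hg : ∀ p ∈ S, ¬ p ∣ g) {s : α}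
    (hs : s ∈ Submonoid.closure S) {b : α} (hdvd : g ∣ s * b) : g ∣ b := by
  induction hs using Submonoid.closure_induction generalizing b with
  | mem p hp => exact ((hS p hp).left_dvd_or_dvd_right_of_dvd_mul hdvd).resolve_left (hg p hp)
  | one => rwa [one_mul] at hdvd
  | mul s t _ _ hs ht => exact ht (hs (by rwa [mul_assoc] at hdvd))

/-- **Nagata's criterion**. -/
theorem HasDenominators.uniqueFactorizationMonoid {A B : Type*} [CommRing A]
    [UniqueFactorizationMonoid A] [CommRing B] [IsDomain B] [WfDvdMonoid B] {φ : A →+* B}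
    {S : Set A} (h : HasDenominators φ (Submonoid.closure S)) (hφ : Function.Injective φ)
    (hS : ∀ s ∈ S, Prime (φ s)) : UniqueFactorizationMonoid B := by
  refine UniqueFactorizationMonoid.iff_exists_prime_mem_of_isPrime.2 fun P hP hPprime => ?_
  by_cases hSP : ∃ s ∈ S, φ s ∈ P
  · obtain ⟨s, hs, hsP⟩ := hSP
    exact ⟨φ s, hsP, hS s hs⟩
  have hclosure : ∀ s ∈ Submonoid.closure S, φ s ∉ P := by
    have : Submonoid.closure S ≤ (P.comap φ).primeCompl :=
      Submonoid.closure_le.2 fun s hs hsP => hSP ⟨s, hs, hsP⟩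
    exact this
  have hcomap : P.comap φ ≠ ⊥ :=
    h.comap_ne_bot (fun s hs h0 => hclosure s hs (h0 ▸ P.zero_mem)) hP
  obtain ⟨q, hqP, hq⟩ := Ideal.IsPrime.exists_mem_prime_of_ne_bot (hPprime.comap φ) hcomap
  have hS' : ∀ p ∈ φ '' S, Prime p := Set.forall_mem_image.2 hS
  have map_closure : (Submonoid.closure S).map (φ : A →* B) = Submonoid.closure (φ '' S) :=
    MonoidHom.map_mclosure _ _
  obtain ⟨s', hs', g, hqg, hg⟩ := exists_mem_closure_eq_mul_forall_not_dvd
    (fun p hp => (hS' p hp).not_isUnit) ((map_ne_zero_iff φ hφ).2 hq.ne_zero)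
  obtain ⟨s, hs, rfl⟩ := map_closure.ge hs'
  have hgP : g ∈ P := (hPprime.mem_or_mem (hqg ▸ hqP : φ s * g ∈ P)).resolve_left (hclosure s hs)
  refine ⟨g, hgP, h.prime_of_map_eq_map_mul hφ hq (fun t ht hqt => ?_) hs hqg fun t ht b =>
    dvd_of_dvd_mul_of_mem_closure hS' hg (map_closure.le (Submonoid.mem_map_of_mem _ ht))⟩
  exact hclosure t ht (Ideal.mem_of_dvd (P.comap φ) hqt hqP)

theorem isCoprime_map_of_mem_closure {A B : Type*} [Monoid A] [CommSemiring B] (φ : A →* B)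
    {S : Set A} {x : B} (hS : ∀ s ∈ S, IsCoprime (φ s) x) {s : A}
    (hs : s ∈ Submonoid.closure S) : IsCoprime (φ s) x := by
  induction hs using Submonoid.closure_induction with
  | mem s hs => exact hS s hs
  | one => simpa only [map_one] using isCoprime_one_left
  | mul s t _ _ hs ht => simpa only [map_mul] using hs.mul_left ht

theorem dvd_map_sub_C_eval {R ι B : Type*} [CommRing R] [CommRing B]
    (φ : MvPolynomial ι R →+* B) {p : ι → R} {d : B} (hd : ∀ j, d ∣ φ (X j - C (p j)))
    (f : MvPolynomial ι R) : d ∣ φ (f - C (eval p f)) := by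
  let π := Ideal.Quotient.mk (Ideal.span {d})
  have hX : ∀ j, π (φ (X j)) = π (φ (C (p j))) := fun j => by
    rw [Ideal.Quotient.mk_eq_mk_iff_sub_mem, ← map_sub, Ideal.mem_span_singleton]
    exact hd j
  have hcomp : π.comp φ = (π.comp φ).comp (C.comp (eval p)) :=
    MvPolynomial.ringHom_ext (fun a => by simp) fun j => by simp [hX]
  rw [← Ideal.mem_span_singleton, map_sub, ← Ideal.Quotient.mk_eq_mk_iff_sub_mem]
  exact DFunLike.congr_fun hcomp f

section Chart

variable {R ι : Type*} [CommRing R]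

theorem mvPolynomial_X_sub_C_ne_zero [Nontrivial R] (o : ι) (a : R) :
    (X o - C a : MvPolynomial ι R) ≠ 0 := fun h => by
  simpa using congrArg (eval fun _ => a + 1) h

open Classical in
/-- Pullback of polynomial functions along the standard chart of the blowup of affine space
at `p` on which `X o - C (p o)` generates the exceptional ideal. In this chart `X o` stands for
`X o - C (p o)` and the other variables for the ratios `(X j - C (p j)) / (X o - C (p o))`. -/
def blowupChartSubst (p : ι → R) (o : ι) : MvPolynomial ι R →ₐ[R] MvPolynomial ι R :=
  aeval fun j => if j = o then X o + C (p o) else X o * X j + C (p j)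

theorem blowupChartSubst_X_self (p : ι → R) (o : ι) :
    blowupChartSubst p o (X o) = X o + C (p o) := by
  simp [blowupChartSubst]

theorem blowupChartSubst_X_of_ne (p : ι → R) {o j : ι} (hj : j ≠ o) :
    blowupChartSubst p o (X j) = X o * X j + C (p j) := by
  simp [blowupChartSubst, hj]

theorem blowupChartSubst_C (p : ι → R) (o : ι) (a : R) : blowupChartSubst p o (C a) = C a :=
  (blowupChartSubst p o).commutes a

theorem hasDenominators_blowupChartSubst (p : ι → R) (o : ι) :
    HasDenominators (blowupChartSubst p o : MvPolynomial ι R →+* MvPolynomial ι R)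
      (Submonoid.powers (X o - C (p o))) := by
  refine .of_adjoin_eq_top (adjoin_range_X (R := R)) ?_
  rintro _ ⟨j, rfl⟩
  refine ⟨_, Submonoid.mem_powers _, ?_⟩
  by_cases hj : j = o
  · subst hj
    refine ⟨(X j - C (p j)) ^ 2, ?_⟩
    simp only [map_sub, map_pow, blowupChartSubst_X_self, blowupChartSubst_C]
    ring
  · refine ⟨X j - C (p j), ?_⟩
    simp only [map_sub, blowupChartSubst_X_self, blowupChartSubst_X_of_ne p hj,
      blowupChartSubst_C]
    ring

theorem isCoprime_blowupChartSubst_X_sub_C {p : ι → R} {o : ι} {a : R} (ha : IsUnit (p o - a)) :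
    IsCoprime (blowupChartSubst p o (X o - C a)) (X o) := by
  have heq : blowupChartSubst p o (X o - C a) = C (p o - a) + X o * 1 := by
    rw [map_sub, blowupChartSubst_X_self, blowupChartSubst_C, C_sub]
    ring
  rw [heq, IsCoprime.add_mul_left_left_iff]
  exact isCoprime_one_left.of_isCoprime_of_dvd_left (ha.map C).dvd

end Chart

/-- The infinite blowup of affine space at the points `c i`: the algebra of rational functions
generated by the coordinates and by the ratios `(X j - C (c i j)) / (X o - C (c i o))` for `j ≠ o`,
where `o` is the distinguished coordinate. -/
def infiniteBlowup {k ι I : Type*} [Field k] (c : I → ι → k) (o : ι) :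
    Subalgebra k (FractionRing (MvPolynomial ι k)) :=
  Algebra.adjoin k
    ((Set.range fun j : ι =>
        algebraMap (MvPolynomial ι k) (FractionRing (MvPolynomial ι k)) (X j)) ∪
      {x | ∃ (j : ι) (i : I), j ≠ o ∧
        x = (algebraMap (MvPolynomial ι k) (FractionRing (MvPolynomial ι k)) (X j) -
              algebraMap k (FractionRing (MvPolynomial ι k)) (c i j)) *
            (algebraMap (MvPolynomial ι k) (FractionRing (MvPolynomial ι k)) (X o) -
              algebraMap k (FractionRing (MvPolynomial ι k)) (c i o))⁻¹})

namespace infiniteBlowup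

variable {k ι I : Type*} [Field k]

theorem algebraMap_X_sub_C_ne_zero (o : ι) (a : k) :
    algebraMap (MvPolynomial ι k) (FractionRing (MvPolynomial ι k)) (X o - C a) ≠ 0 :=
  (map_ne_zero_iff _ (IsFractionRing.injective _ _)).2 (mvPolynomial_X_sub_C_ne_zero o a)

variable (c : I → ι → k) (o : ι)

/-- The inclusion of the polynomial ring into the infinite blowup. -/
def ofPolynomial : MvPolynomial ι k →ₐ[k] infiniteBlowup c o :=
  aeval fun j => ⟨algebraMap _ _ (X j), Algebra.subset_adjoin (Or.inl ⟨j, rfl⟩)⟩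

theorem coe_ofPolynomial (f : MvPolynomial ι k) :
    (ofPolynomial c o f : FractionRing (MvPolynomial ι k)) = algebraMap _ _ f := by
  have hcomp : (infiniteBlowup c o).val.comp (ofPolynomial c o) =
      IsScalarTower.toAlgHom k (MvPolynomial ι k) (FractionRing (MvPolynomial ι k)) :=
    MvPolynomial.algHom_ext fun j => by simp [ofPolynomial]
  exact DFunLike.congr_fun hcomp f

theorem ofPolynomial_injective : Function.Injective (ofPolynomial c o) := fun f g hfg =>
  IsFractionRing.injective (MvPolynomial ι k) (FractionRing (MvPolynomial ι k)) <| by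
    rw [← coe_ofPolynomial c o, hfg, coe_ofPolynomial]

/-- The ratio `(X j - C (c i j)) / (X o - C (c i o))` as an element of the infinite blowup; for
`j = o` it is `1`. -/
def slope (i : I) (j : ι) : infiniteBlowup c o :=
  ⟨algebraMap _ _ (X j - C (c i j)) * (algebraMap _ _ (X o - C (c i o)))⁻¹, by
    by_cases hj : j = o
    · subst hj
      rw [mul_inv_cancel₀]
      · exact one_mem _
      · exact algebraMap_X_sub_C_ne_zero j (c i j)
    · refine Algebra.subset_adjoin (Or.inr ⟨j, i, hj, ?_⟩)
      simp only [map_sub, ← algebraMap_eq, ← IsScalarTower.algebraMap_apply]⟩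

theorem ofPolynomial_mul_slope (i : I) (j : ι) :
    ofPolynomial c o (X o - C (c i o)) * slope c o i j = ofPolynomial c o (X j - C (c i j)) := by
  refine Subtype.ext ?_
  rw [MulMemClass.coe_mul, coe_ofPolynomial, coe_ofPolynomial, slope, mul_comm,
    inv_mul_cancel_right₀ (algebraMap_X_sub_C_ne_zero o (c i o))]

theorem adjoin_eq_top :
    Algebra.adjoin k ((Set.range fun j => ofPolynomial c o (X j)) ∪
      {b | ∃ i, ∃ j ≠ o, b = slope c o i j}) = ⊤ := by
  refine top_le_iff.1 (Algebra.adjoin_adjoin_coe_preimage.ge.trans (Algebra.adjoin_mono ?_))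
  rintro b (⟨j, hj⟩ | ⟨j, i, hj, hb⟩)
  · exact Or.inl ⟨j, Subtype.ext ((coe_ofPolynomial c o _).trans hj)⟩
  · refine Or.inr ⟨i, j, hj, Subtype.ext (hb.trans ?_)⟩
    simp only [slope, map_sub, ← algebraMap_eq, ← IsScalarTower.algebraMap_apply]

variable {c o}

theorem ofPolynomial_ne_zero_of_mem_closure {s : MvPolynomial ι k}
    (hs : s ∈ Submonoid.closure (Set.range fun i => X o - C (c i o))) :
    ofPolynomial c o s ≠ 0 := by
  have hle : Submonoid.closure (Set.range fun i => X o - C (c i o)) ≤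
      nonZeroDivisors (MvPolynomial ι k) :=
    Submonoid.closure_le.2 <| Set.range_subset_iff.2 fun i =>
      mem_nonZeroDivisors_of_ne_zero (mvPolynomial_X_sub_C_ne_zero o (c i o))
  exact (map_ne_zero_iff _ (ofPolynomial_injective c o)).2 (nonZeroDivisors.ne_zero (hle hs))

theorem hasDenominators {A : Type*} [CommSemiring A] [Algebra k A]
    {ψ : A →ₐ[k] infiniteBlowup c o} {θ : MvPolynomial ι k →ₐ[k] A}
    (hψθ : ψ.comp θ = ofPolynomial c o) (J : Set I)
    (hJ : ∀ i ∉ J, ∀ j ≠ o, slope c o i j ∈ ψ.range) :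
    HasDenominators (ψ : A →+* infiniteBlowup c o)
      ((Submonoid.closure ((fun i => X o - C (c i o)) '' J)).map θ) := by
  have hψ : ∀ f, ψ (θ f) = ofPolynomial c o f := DFunLike.congr_fun hψθ
  refine .of_adjoin_eq_top (adjoin_eq_top c o) ?_
  rintro _ (⟨j, rfl⟩ | ⟨i, j, hj, rfl⟩)
  · exact ⟨1, one_mem _, θ (X j), by rw [map_one, one_mul, hψ]⟩
  · by_cases hi : i ∈ J
    · exact ⟨θ (X o - C (c i o)), Submonoid.mem_map_of_mem θ
        (Submonoid.subset_closure (Set.mem_image_of_mem _ hi)), θ (X j - C (c i j)), by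
          rw [hψ, hψ, ofPolynomial_mul_slope]⟩
    · obtain ⟨a, ha⟩ := hJ i hi j hj
      exact ⟨1, one_mem _, a, by rw [map_one, one_mul]; exact ha.symm⟩

variable (c o) in
theorem hasDenominators_ofPolynomial :
    HasDenominators (ofPolynomial c o : MvPolynomial ι k →+* infiniteBlowup c o)
      (Submonoid.closure (Set.range fun i => X o - C (c i o))) := by
  intro b
  obtain ⟨_, ⟨s, hs, rfl⟩, a, ha⟩ := hasDenominators (AlgHom.comp_id (ofPolynomial c o))
    Set.univ (by simp) b
  exact ⟨s, by rwa [Set.image_univ] at hs, a, ha⟩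

open Classical in
variable (c o) in
/-- The `n`-th standard chart of the infinite blowup, sending `X o` to the equation
`X o - C (c n o)` of the exceptional divisor and `X j` to `slope c o n j` for `j ≠ o`. -/
def chart (n : I) : MvPolynomial ι k →ₐ[k] infiniteBlowup c o :=
  aeval (Function.update (slope c o n) o (ofPolynomial c o (X o - C (c n o))))

theorem chart_X_self (n : I) : chart c o n (X o) = ofPolynomial c o (X o - C (c n o)) := by
  simp [chart]

theorem chart_X_of_ne (n : I) {j : ι} (hj : j ≠ o) : chart c o n (X j) = slope c o n j := by
  simp [chart, hj]

theorem chart_comp_blowupChartSubst (n : I) :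
    (chart c o n).comp (blowupChartSubst (c n) o) = ofPolynomial c o := by
  have hC : ∀ a, chart c o n (C a) = ofPolynomial c o (C a) := fun a =>
    ((chart c o n).commutes a).trans ((ofPolynomial c o).commutes a).symm
  refine MvPolynomial.algHom_ext fun j => ?_
  rw [AlgHom.comp_apply]
  by_cases hj : j = o
  · rw [hj, blowupChartSubst_X_self, map_add, chart_X_self, hC, ← map_add, sub_add_cancel]
  · rw [blowupChartSubst_X_of_ne _ hj, map_add, map_mul, chart_X_self, chart_X_of_ne n hj, hC,
      ofPolynomial_mul_slope, ← map_add, sub_add_cancel]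

theorem chart_injective (n : I) : Function.Injective (chart c o n) := by
  refine (hasDenominators_blowupChartSubst (c n) o).injective_of_comp
    (ψ := (chart c o n : MvPolynomial ι k →+* infiniteBlowup c o)) ?_ ?_
  · rintro _ ⟨N, rfl⟩
    simpa only [RingHom.coe_coe, map_pow, map_sub, blowupChartSubst_X_self, blowupChartSubst_C,
      add_sub_cancel_right] using pow_ne_zero N (X_ne_zero (R := k) o)
  · have hcomp := ofPolynomial_injective c o
    rwa [← chart_comp_blowupChartSubst n] at hcomp

theorem prime_ofPolynomial_X_sub_C (hc : Function.Injective fun i => c i o) (n : I) :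
    Prime (ofPolynomial c o (X o - C (c n o))) := by
  have hdenom := hasDenominators (chart_comp_blowupChartSubst (c := c) (o := o) n) {n}ᶜ <| by
    intro i hi j hj
    obtain rfl : i = n := not_not.1 hi
    exact ⟨X j, chart_X_of_ne i hj⟩
  rw [← chart_X_self]
  refine hdenom.prime_map (chart_injective n) X_prime ?_
  rintro _ ⟨s, hs, rfl⟩
  refine isCoprime_map_of_mem_closure
    (blowupChartSubst (c n) o : MvPolynomial ι k →* MvPolynomial ι k) ?_ hs
  rintro _ ⟨i, hi, rfl⟩
  exact isCoprime_blowupChartSubst_X_sub_C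
    (IsUnit.mk0 _ (sub_ne_zero.2 fun h => hi (hc h).symm))

theorem ofPolynomial_X_sub_C_dvd (i : I) (f : MvPolynomial ι k) :
    ofPolynomial c o (X o - C (c i o)) ∣ ofPolynomial c o (f - C (eval (c i) f)) :=
  dvd_map_sub_C_eval (ofPolynomial c o : MvPolynomial ι k →+* infiniteBlowup c o)
    (fun j => Dvd.intro _ (ofPolynomial_mul_slope c o i j)) f

theorem isCoprime_ofPolynomial_X_sub_C {i : I} {f : MvPolynomial ι k} (hf : eval (c i) f ≠ 0) :
    IsCoprime (ofPolynomial c o (X o - C (c i o))) (ofPolynomial c o f) := by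
  have hunit : IsUnit (ofPolynomial c o (C (eval (c i) f))) :=
    ((IsUnit.mk0 _ hf).map C).map (ofPolynomial c o)
  obtain ⟨r, hr⟩ := ofPolynomial_X_sub_C_dvd (o := o) i f
  rw [map_sub, sub_eq_iff_eq_add'] at hr
  rw [hr, IsCoprime.add_mul_left_right_iff]
  exact isCoprime_one_right.of_isCoprime_of_dvd_right hunit.dvd

variable (c o) in
/-- The subalgebra of the infinite blowup generated by the coordinates and by the slopes at the
points indexed by `F`, encoded as the image of a polynomial ring on these generators. -/
def stage (F : Set I) : MvPolynomial (ι ⊕ F × ι) k →ₐ[k] infiniteBlowup c o :=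
  aeval (Sum.elim (fun j => ofPolynomial c o (X j)) fun ij => slope c o ij.1 ij.2)

theorem stage_comp_rename (F : Set I) :
    (stage c o F).comp (rename Sum.inl) = ofPolynomial c o :=
  MvPolynomial.algHom_ext fun j => by simp [stage]

theorem hasDenominators_stage (F : Set I) :
    HasDenominators (stage c o F : MvPolynomial (ι ⊕ F × ι) k →+* infiniteBlowup c o)
      ((Submonoid.closure ((fun i => X o - C (c i o)) '' Fᶜ)).map
        (rename Sum.inl : MvPolynomial ι k →ₐ[k] MvPolynomial (ι ⊕ F × ι) k)) :=
  hasDenominators (stage_comp_rename F) Fᶜ fun i hi j _ =>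
    ⟨X (Sum.inr (⟨i, not_not.1 hi⟩, j)), by simp [stage]⟩

theorem map_comap_stage_eq {f : MvPolynomial ι k} {K : Ideal (infiniteBlowup c o)}
    (hf : ofPolynomial c o f ∈ K) :
    (K.comap (stage c o {i | eval (c i) f = 0})).map (stage c o {i | eval (c i) f = 0}) = K := by
  have stage_rename : ∀ g, stage c o {i | eval (c i) f = 0} (rename Sum.inl g) =
      ofPolynomial c o g := DFunLike.congr_fun (stage_comp_rename _)
  refine (hasDenominators_stage {i | eval (c i) f = 0}).map_comap_eq (f := rename Sum.inl f) ?_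
    ((stage_rename f).symm ▸ hf)
  rintro _ ⟨s, hs, rfl⟩
  rw [RingHom.coe_coe, stage_rename, stage_rename]
  refine isCoprime_map_of_mem_closure
    (ofPolynomial c o : MvPolynomial ι k →* infiniteBlowup c o) ?_ hs
  rintro _ ⟨i, hi, rfl⟩
  exact isCoprime_ofPolynomial_X_sub_C hi

theorem isNoetherianRing [Finite ι]
    (hc : ∀ f : MvPolynomial ι k, f ≠ 0 → {i | eval (c i) f = 0}.Finite) :
    IsNoetherianRing (infiniteBlowup c o) := by
  refine (isNoetherianRing_iff_ideal_fg _).2 fun K => ?_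
  rcases eq_or_ne K ⊥ with rfl | hK
  · exact Submodule.fg_bot
  obtain ⟨f, hfK, hf⟩ := Submodule.exists_mem_ne_zero_of_ne_bot
    ((hasDenominators_ofPolynomial c o).comap_ne_bot
      (fun _ => ofPolynomial_ne_zero_of_mem_closure) hK)
  have : Finite {i | eval (c i) f = 0} := hc f hf
  rw [← map_comap_stage_eq hfK]
  exact ((isNoetherianRing_iff_ideal_fg _).1 inferInstance _).map _

theorem uniqueFactorizationMonoid [WfDvdMonoid (infiniteBlowup c o)]
    (hc : Function.Injective fun i => c i o) :
    UniqueFactorizationMonoid (infiniteBlowup c o) := by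
  refine (hasDenominators_ofPolynomial c o).uniqueFactorizationMonoid
    (ofPolynomial_injective c o) ?_
  rintro _ ⟨i, rfl⟩
  exact prime_ofPolynomial_X_sub_C hc i

end infiniteBlowup

theorem stmt_4_general {k ι I : Type*} [Field k] [Finite ι] (c : I → ι → k) (o : ι)
    (hdist : Function.Injective fun i => c i o)
    (hdense : ∀ f : MvPolynomial ι k, f ≠ 0 → {i | eval (c i) f = 0}.Finite) :
    IsNoetherianRing (infiniteBlowup c o) ∧ UniqueFactorizationMonoid (infiniteBlowup c o) := by
  have hnoeth := infiniteBlowup.isNoetherianRing (o := o) hdense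
  have : WfDvdMonoid (infiniteBlowup c o) := IsNoetherianRing.wfDvdMonoid
  exact ⟨hnoeth, infiniteBlowup.uniqueFactorizationMonoid hdist⟩

/-- the infinite blowup of `𝔸^t` (`t ≥ 2`) at a critically dense sequence of
points with pairwise distinct first coordinates is a noetherian ring and a UFD. -/
theorem stmt_4 {k : Type*} [Field k] [IsAlgClosed k]
    (t : ℕ) (ht : 2 ≤ t) (c : ℕ → Fin t → k)
    (hdist : ∀ i j : ℕ, i ≠ j → c i ⟨0, by omega⟩ ≠ c j ⟨0, by omega⟩)
    (hcd : ∀ f : MvPolynomial (Fin t) k, f ≠ 0 →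
      {i : ℕ | MvPolynomial.eval (c i) f = 0}.Finite) :
    IsNoetherianRing (Algebra.adjoin k
      ((Set.range fun j : Fin t =>
          algebraMap (MvPolynomial (Fin t) k) (FractionRing (MvPolynomial (Fin t) k))
            (MvPolynomial.X j)) ∪
       {x : FractionRing (MvPolynomial (Fin t) k) | ∃ (j : Fin t) (i : ℕ),
          j ≠ ⟨0, by omega⟩ ∧
          x = (algebraMap (MvPolynomial (Fin t) k) (FractionRing (MvPolynomial (Fin t) k))
                  (MvPolynomial.X j) -
                algebraMap k (FractionRing (MvPolynomial (Fin t) k)) (c i j)) *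
              (algebraMap (MvPolynomial (Fin t) k) (FractionRing (MvPolynomial (Fin t) k))
                  (MvPolynomial.X ⟨0, by omega⟩) -
                algebraMap k (FractionRing (MvPolynomial (Fin t) k))
                  (c i ⟨0, by omega⟩))⁻¹})) ∧
    UniqueFactorizationMonoid (Algebra.adjoin k
      ((Set.range fun j : Fin t =>
          algebraMap (MvPolynomial (Fin t) k) (FractionRing (MvPolynomial (Fin t) k))
            (MvPolynomial.X j)) ∪
       {x : FractionRing (MvPolynomial (Fin t) k) | ∃ (j : Fin t) (i : ℕ),
          j ≠ ⟨0, by omega⟩ ∧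
          x = (algebraMap (MvPolynomial (Fin t) k) (FractionRing (MvPolynomial (Fin t) k))
                  (MvPolynomial.X j) -
                algebraMap k (FractionRing (MvPolynomial (Fin t) k)) (c i j)) *
              (algebraMap (MvPolynomial (Fin t) k) (FractionRing (MvPolynomial (Fin t) k))
                  (MvPolynomial.X ⟨0, by omega⟩) -
                algebraMap k (FractionRing (MvPolynomial (Fin t) k))
                  (c i ⟨0, by omega⟩))⁻¹})) := by
  exact stmt_4_general c _ (fun i j hij => by_contra fun hne => hdist i j hne hij) hcd
end
end
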